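/- Let n ≥ 1 and 1 ≥ ρ > 0 (so δ = 0). Assume σ ∈ S^0_{ρ,0}(ℝⁿ) is real-valued and satisfies σ(x,ξ) ≥ c₀ for all (x,ξ) ∈ ℝⁿ×ℝⁿ, for some constant c₀ > 0. Then there exist constants c > 0 and C > 0 such that for all f ∈ 𝒮(ℝⁿ): Re ∫_{ℝⁿ} Op^{KN}(σ)f(x) · conj(f(x)) dx ≥ c ‖f‖²_{L²(ℝⁿ)} − C ‖f‖²_{H^{−ρ/2}(ℝⁿ)}. (Euclidean analogue, for order 0, of the two-term elliptic Gårding inequality of Theorems 3.2 and 4.5.) -/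

import Mathlib

open MeasureTheory Complex

noncomputable section

/-- `e^{2πit}`. -/
def expi (t : ℝ) : ℂ := Complex.exp (2 * (Real.pi : ℂ) * Complex.I * (t : ℂ))

/-- Dot product on `ℝⁿ`. -/
def dotp {n : ℕ} (x y : Fin n → ℝ) : ℝ := ∑ i, x i * y i

/-- Euclidean Fourier transform `𝓕f(ξ) = ∫ f(y) e^{-2πi y·ξ} dy`. -/
def FT {n : ℕ} (f : (Fin n → ℝ) → ℂ) (ξ : Fin n → ℝ) : ℂ :=
  ∫ y, f y * expi (-(dotp y ξ))

/-- Bargmann-type transform `B_a[f](x,ξ) = ∫ f(y) a(y-x) e^{-2πi y·ξ} dy`. -/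
def Barg {n : ℕ} (a f : (Fin n → ℝ) → ℂ) (x ξ : Fin n → ℝ) : ℂ :=
  ∫ y, f y * a (y - x) * expi (-(dotp y ξ))

/-- Wick quantization with window `a`. -/
def WickOp {n : ℕ} (a : (Fin n → ℝ) → ℂ) (σ : (Fin n → ℝ) → (Fin n → ℝ) → ℂ)
    (f : (Fin n → ℝ) → ℂ) (y : Fin n → ℝ) : ℂ :=
  ∫ p : (Fin n → ℝ) × (Fin n → ℝ),
    σ p.1 p.2 * Barg a f p.1 p.2 * (starRingEnd ℂ) (a (y - p.1)) * expi (dotp y p.2)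

/-- Kohn–Nirenberg quantization. -/
def OpKN {n : ℕ} (σ : (Fin n → ℝ) → (Fin n → ℝ) → ℂ) (f : (Fin n → ℝ) → ℂ)
    (x : Fin n → ℝ) : ℂ :=
  ∫ ξ, expi (dotp x ξ) * σ x ξ * FT f ξ

/-- Partial derivative in the `i`-th coordinate direction. -/
def pd {n : ℕ} (i : Fin n) (F : (Fin n → ℝ) → ℂ) : (Fin n → ℝ) → ℂ :=
  fun x => fderiv ℝ F x (Pi.single i 1)

/-- Multi-index derivative `∂^α`. -/
def md {n : ℕ} (α : Fin n → ℕ) (F : (Fin n → ℝ) → ℂ) : (Fin n → ℝ) → ℂ :=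
  (((List.finRange n).map fun i => (pd i)^[α i]).foldr (· ∘ ·) id) F

/-- Mixed derivative `∂_x^β ∂_ξ^α σ`. -/
def mixedD {n : ℕ} (β α : Fin n → ℕ) (σ : (Fin n → ℝ) → (Fin n → ℝ) → ℂ) :
    (Fin n → ℝ) → (Fin n → ℝ) → ℂ :=
  fun x ξ => md β (fun x' => md α (fun ξ' => σ x' ξ') ξ) x

/-- The weight `1 + |ξ|²` (Euclidean norm squared). -/
def wt {n : ℕ} (ξ : Fin n → ℝ) : ℝ := 1 + ∑ i, ξ i ^ 2

/-- Length `|α|` of a multi-index, as a real number. -/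
def mOrd {n : ℕ} (α : Fin n → ℕ) : ℝ := ∑ i, (α i : ℝ)

/-- The Hörmander class `S^m_{ρ,δ}(ℝⁿ)`. -/
def SymbolClass {n : ℕ} (m ρ δ : ℝ) (σ : (Fin n → ℝ) → (Fin n → ℝ) → ℂ) : Prop :=
  (ContDiff ℝ (⊤ : ℕ∞) fun p : (Fin n → ℝ) × (Fin n → ℝ) => σ p.1 p.2) ∧
  ∀ α β : Fin n → ℕ, ∃ C > 0, ∀ x ξ,
    ‖mixedD β α σ x ξ‖ ≤ C * wt ξ ^ ((m - ρ * mOrd α + δ * mOrd β) / 2)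

/-- The seminorm `‖σ‖_{S^m_{ρ,δ},α,β}`. -/
def hSem {n : ℕ} (m ρ δ : ℝ) (α β : Fin n → ℕ)
    (σ : (Fin n → ℝ) → (Fin n → ℝ) → ℂ) : ℝ :=
  ⨆ p : (Fin n → ℝ) × (Fin n → ℝ),
    wt p.2 ^ (-(m - ρ * mOrd α + δ * mOrd β) / 2) * ‖mixedD β α σ p.1 p.2‖

/-- Squared Sobolev norm `‖f‖²_{H^s}`. -/
def sobSq {n : ℕ} (s : ℝ) (f : (Fin n → ℝ) → ℂ) : ℝ :=
  ∫ ξ, wt ξ ^ s * ‖FT f ξ‖ ^ 2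

end

/-!
The form `⟨Op^{KN}(σ) f, f⟩` is the integral of `σ` against the Rihaczek distribution
`e^{2πi x·ξ} 𝓕f(ξ) conj (f x)`. Smoothing this distribution by the kernel
`e^{-2πi u·v} e^{-π(|u|² + |v|²)}`, whose integral is positive, turns it into a nonnegative
spectrogram and only rescales the total integral. If `σ - c₀ ≥ 0` is frozen at the centre of each
translate of the kernel, it contributes the integral of a nonnegative function.

The freezing error involves only derivatives of `σ` of order at least one. The localized difference
`σ(· + p) - σ(p)` has a Fourier transform which decays at a rate controlled by a weight `m(ξ)`
dominating those derivatives, so Schur's test and AM-GM, applied to Gabor transforms of `f` and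
`𝓕f`, bound the error by a multiple of `ε ‖f‖² + ‖m 𝓕f‖² / ε`.

After the symplectic dilation `(x, ξ) ↦ (l⁻¹ x, l ξ)` with `l` large, the `x`-derivatives are at
most `ε`, while the `ξ`-derivatives decay as `|ξ| → ∞`. Hence one may take
`m = ε + C (1 + |ξ|²)^{s/2}` for any `s ≤ 0`, with `C` depending on `ε`, and the error becomes
`O(ε) ‖f‖² + C' ‖f‖²_{H^s}`.
-/

namespace Garding

open scoped FourierTransform ContDiff RealInnerProductSpace SchwartzMap ENNReal

noncomputable section

/-! ### Pure directional derivatives -/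

section PureDeriv

variable {E E' : Type*} [NormedAddCommGroup E] [NormedSpace ℝ E]
  [NormedAddCommGroup E'] [NormedSpace ℝ E']

/-- The `k`-th derivative `∂_e^k F` of `F` in the direction `e`. The whole argument needs only such
pure derivatives of the symbol, no mixed ones. -/
def pureDeriv (e : E) (k : ℕ) (F : E → ℂ) (w : E) : ℂ :=
  iteratedFDeriv ℝ k F w fun _ => e

@[simp]
lemma pureDeriv_zero (e : E) (F : E → ℂ) : pureDeriv e 0 F = F := by
  funext w
  simp [pureDeriv]

lemma pureDeriv_one (e : E) (F : E → ℂ) (w : E) : pureDeriv e 1 F w = fderiv ℝ F w e := by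
  simp [pureDeriv, iteratedFDeriv_one_apply]

lemma contDiff_pureDeriv (e : E) (k : ℕ) {F : E → ℂ} (hF : ContDiff ℝ ∞ F) :
    ContDiff ℝ ∞ (pureDeriv e k F) :=
  (ContinuousMultilinearMap.apply ℝ (fun _ : Fin k => E) ℂ fun _ => e).contDiff.comp
    (hF.iteratedFDeriv_right (by norm_cast))

lemma pureDeriv_succ (e : E) (k : ℕ) {F : E → ℂ} (hF : ContDiff ℝ ∞ F) (w : E) :
    pureDeriv e (k + 1) F w = fderiv ℝ (pureDeriv e k F) w e := by
  have hD : DifferentiableAt ℝ (iteratedFDeriv ℝ k F) w :=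
    (hF.differentiable_iteratedFDeriv (by exact_mod_cast WithTop.coe_lt_top k)) w
  have happly := (ContinuousMultilinearMap.apply ℝ (fun _ : Fin k => E) ℂ
    fun _ => e).hasFDerivAt.comp w hD.hasFDerivAt
  rw [pureDeriv, iteratedFDeriv_succ_apply_left]
  exact (congrArg (· e) happly.fderiv).symm

lemma norm_pureDeriv_le (e : E) (k : ℕ) (F : E → ℂ) (w : E) :
    ‖pureDeriv e k F w‖ ≤ ‖iteratedFDeriv ℝ k F w‖ * ‖e‖ ^ k := by
  simpa [pureDeriv] using (iteratedFDeriv ℝ k F w).le_opNorm fun _ => e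

lemma pureDeriv_comp_affine (e : E) (k : ℕ) (L : E →L[ℝ] E') (p : E') {F : E' → ℂ}
    (hF : ContDiff ℝ ∞ F) (w : E) :
    pureDeriv e k (fun x => F (L x + p)) w = pureDeriv (L e) k F (L w + p) := by
  have hFp : ContDiff ℝ ∞ fun y => F (y + p) := hF.comp (contDiff_id.add contDiff_const)
  have hcomp := L.iteratedFDeriv_comp_right hFp w (i := k) (by exact_mod_cast le_top)
  rw [iteratedFDeriv_comp_add_right] at hcomp
  exact congrArg (fun D => D fun _ => e) hcomp

lemma pureDeriv_smul (e : E) (k : ℕ) (r : ℝ) (F : E → ℂ) (w : E) :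
    pureDeriv (r • e) k F w = r ^ k * pureDeriv e k F w := by
  simpa [pureDeriv] using (iteratedFDeriv ℝ k F w).map_smul_univ (fun _ => r) fun _ => e

lemma pureDeriv_eq_iteratedDeriv (e : E) (k : ℕ) {F : E → ℂ} (hF : ContDiff ℝ ∞ F) (w : E) :
    pureDeriv e k F w = iteratedDeriv k (fun t : ℝ => F (t • e + w)) 0 := by
  have hline := pureDeriv_comp_affine 1 k (ContinuousLinearMap.toSpanSingleton ℝ e) w hF 0
  simp only [ContinuousLinearMap.toSpanSingleton_apply, one_smul, zero_smul, zero_add] at hline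
  rw [← hline, pureDeriv, iteratedDeriv_eq_iteratedFDeriv]

lemma pureDeriv_sub_const (e : E) (k : ℕ) {F : E → ℂ} (hF : ContDiff ℝ ∞ F) (c : ℂ) (w : E) :
    pureDeriv e (k + 1) (fun x => F x - c) w = pureDeriv e (k + 1) F w := by
  rw [pureDeriv_eq_iteratedDeriv e _ (hF.sub contDiff_const), pureDeriv_eq_iteratedDeriv e _ hF]
  simp only [iteratedDeriv_succ', deriv_sub_const_fun]

lemma pureDeriv_mul (e : E) (k : ℕ) {F G : E → ℂ} (hF : ContDiff ℝ ∞ F) (hG : ContDiff ℝ ∞ G)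
    (w : E) :
    pureDeriv e k (fun x => F x * G x) w =
      ∑ i ∈ Finset.range (k + 1), k.choose i * pureDeriv e i F w * pureDeriv e (k - i) G w := by
  have hline : ContDiff ℝ ∞ fun t : ℝ => t • e + w := by fun_prop
  have hk : (k : ℕ∞ω) ≤ (⊤ : ℕ∞) := by exact_mod_cast le_top
  simp only [pureDeriv_eq_iteratedDeriv e _ hF, pureDeriv_eq_iteratedDeriv e _ hG,
    pureDeriv_eq_iteratedDeriv e _ (hF.mul hG)]
  exact iteratedDeriv_fun_mul ((hF.comp hline).of_le hk).contDiffAt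
    ((hG.comp hline).of_le hk).contDiffAt

lemma norm_pureDeriv_mul_le (e : E) (k : ℕ) {F G : E → ℂ} (hF : ContDiff ℝ ∞ F)
    (hG : ContDiff ℝ ∞ G) (w : E) {a b : ℝ} (ha : ∀ i ≤ k, ‖pureDeriv e i F w‖ ≤ a)
    (hb : ∀ i ≤ k, ‖pureDeriv e i G w‖ ≤ b) :
    ‖pureDeriv e k (fun x => F x * G x) w‖ ≤ 2 ^ k * (a * b) := by
  have ha0 : 0 ≤ a := (norm_nonneg _).trans (ha 0 k.zero_le)
  rw [pureDeriv_mul e k hF hG]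
  calc _ ≤ ∑ i ∈ Finset.range (k + 1), (k.choose i : ℝ) * (a * b) := by
        refine norm_sum_le_of_le _ fun i hi => ?_
        rw [norm_mul, norm_mul, mul_assoc, RCLike.norm_natCast]
        gcongr
        · exact ha i (Finset.mem_range_succ_iff.1 hi)
        · exact hb _ (Nat.sub_le k i)
    _ = 2 ^ k * (a * b) := by
        rw [← Finset.sum_mul]
        exact_mod_cast congrArg (· * (a * b)) (congrArg (Nat.cast (R := ℝ))
          (Nat.sum_range_choose k))

end PureDeriv

/-! ### The phase and the Fourier transform -/

lemma norm_expi (t : ℝ) : ‖expi t‖ = 1 := by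
  rw [expi, show 2 * (Real.pi : ℂ) * I * t = ((2 * Real.pi * t : ℝ) : ℂ) * I by push_cast; ring]
  exact Complex.norm_exp_ofReal_mul_I _

lemma expi_add (s t : ℝ) : expi (s + t) = expi s * expi t := by
  rw [expi, expi, expi, ← Complex.exp_add]
  push_cast
  ring_nf

lemma conj_expi (t : ℝ) : (starRingEnd ℂ) (expi t) = expi (-t) := by
  simp [expi, ← Complex.exp_conj, Complex.conj_ofNat]

@[fun_prop]
lemma continuous_expi : Continuous expi := by
  unfold expi
  fun_prop

lemma integrable_expi_mul {X : Type*} [TopologicalSpace X] [MeasurableSpace X]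
    [OpensMeasurableSpace X] {μ : Measure X} {u : X → ℝ} (hu : Continuous u) {f : X → ℂ}
    (hf : Integrable f μ) : Integrable (fun v => expi (u v) * f v) μ :=
  hf.bdd_mul (c := 1) (continuous_expi.comp hu).aestronglyMeasurable
    (.of_forall fun _ => (norm_expi _).le)

section Fourier

variable {E : Type*} [NormedAddCommGroup E] [InnerProductSpace ℝ E]
  {ι : Type*} [Fintype ι] (β : OrthonormalBasis ι ℝ E)

lemma hasFDerivAt_expi_neg_inner (θ v : E) :
    HasFDerivAt (fun v : E => expi (-⟪v, θ⟫))
      (expi (-⟪v, θ⟫) • (-(2 * Real.pi * I)) • Complex.ofRealCLM.comp (innerSL ℝ θ)) v := by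
  have hinner : HasFDerivAt (fun v : E => ((⟪v, θ⟫ : ℝ) : ℂ))
      (Complex.ofRealCLM.comp (innerSL ℝ θ)) v := by
    simpa only [ContinuousLinearMap.coe_comp, Function.comp_def, innerSL_apply_apply,
      Complex.ofRealCLM_apply, real_inner_comm] using
      (Complex.ofRealCLM.comp (innerSL ℝ θ)).hasFDerivAt (x := v)
  simpa [expi] using (hinner.const_mul (-(2 * Real.pi * I))).cexp

lemma norm_le_sum_abs_inner (θ : E) : ‖θ‖ ≤ ∑ j, |⟪β j, θ⟫| := by
  conv_lhs => rw [← β.sum_repr' θ]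
  refine norm_sum_le_of_le _ fun j _ => ?_
  rw [norm_smul, β.norm_eq_one, mul_one, Real.norm_eq_abs]

lemma one_add_norm_le_or_exists_le_abs_inner (θ : E) :
    1 + ‖θ‖ ≤ 1 + Fintype.card ι ∨ ∃ j, 1 + ‖θ‖ ≤ (1 + Fintype.card ι) * |⟪β j, θ⟫| := by
  by_contra! hlt
  obtain ⟨hcard, hinner⟩ := hlt
  have hsum : (1 + Fintype.card ι) * ‖θ‖ ≤ Fintype.card ι * (1 + ‖θ‖) :=
    calc (1 + Fintype.card ι) * ‖θ‖ ≤ (1 + Fintype.card ι) * ∑ j, |⟪β j, θ⟫| := by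
          gcongr
          exact norm_le_sum_abs_inner β θ
      _ ≤ ∑ _j : ι, (1 + ‖θ‖) := by
          rw [Finset.mul_sum]
          exact Finset.sum_le_sum fun j _ => (hinner j).le
      _ = _ := by simp [mul_add]
  linarith

variable [FiniteDimensional ℝ E] [MeasurableSpace E] [BorelSpace E]

lemma fourier_eq_integral_expi (f : E → ℂ) (w : E) : 𝓕 f w = ∫ v, expi (-⟪v, w⟫) * f v := by
  rw [Real.fourier_eq']
  refine integral_congr_ae (.of_forall fun v => ?_)
  simp only [expi, smul_eq_mul]
  push_cast
  ring_nf

lemma norm_fourier_le_integral_norm (f : E → ℂ) (w : E) : ‖𝓕 f w‖ ≤ ∫ v, ‖f v‖ := by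
  simpa only [fourier_eq_integral_expi, norm_mul, norm_expi, one_mul] using
    norm_integral_le_integral_norm (μ := volume) fun v => expi (-⟪v, w⟫) * f v

lemma integral_fourier_mul {f g : E → ℂ} (hf : Integrable f) (hg : Integrable g) :
    ∫ ξ, 𝓕 f ξ * g ξ = ∫ x, f x * 𝓕 g x := by
  simpa using! VectorFourier.integral_bilin_fourierIntegral_eq_flip (ContinuousLinearMap.mul ℂ ℂ)
    (L := innerₗ E) Real.continuous_fourierChar continuous_inner hf hg

lemma fourier_fderiv_apply (e : E) {b : E → ℂ} (hb : Differentiable ℝ b) (hint : Integrable b)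
    (hint' : Integrable fun v => fderiv ℝ b v e) (θ : E) :
    𝓕 (fun v => fderiv ℝ b v e) θ = 2 * Real.pi * I * ⟪e, θ⟫ * 𝓕 b θ := by
  have hphase : Continuous fun v : E => -⟪v, θ⟫ := by fun_prop
  have hderiv : ∀ v, fderiv ℝ (fun v : E => expi (-⟪v, θ⟫)) v e * b v =
      -(2 * Real.pi * I * ⟪e, θ⟫) * (expi (-⟪v, θ⟫) * b v) := fun v => by
    rw [(hasFDerivAt_expi_neg_inner θ v).fderiv]
    simp only [smul_apply, ContinuousLinearMap.comp_apply, innerSL_apply_apply,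
      Complex.ofRealCLM_apply, smul_eq_mul, real_inner_comm θ e]
    ring
  have hparts := integral_mul_fderiv_eq_neg_fderiv_mul_of_integrable (μ := volume) (𝕜 := ℂ)
    (f := fun v : E => expi (-⟪v, θ⟫)) (g := b) (v := e)
    (by simpa only [hderiv] using (integrable_expi_mul hphase hint).const_mul _)
    (integrable_expi_mul hphase hint') (integrable_expi_mul hphase hint)
    (fun v _ => (hasFDerivAt_expi_neg_inner θ v).differentiableAt) (fun v _ => hb v)
  rw [fourier_eq_integral_expi, hparts, fourier_eq_integral_expi]
  simp_rw [hderiv]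
  rw [integral_const_mul]
  ring

lemma fourier_pureDeriv (e : E) {b : E → ℂ} (hb : ContDiff ℝ ∞ b) (K : ℕ)
    (hint : ∀ i ≤ K, Integrable (pureDeriv e i b)) (θ : E) :
    𝓕 (pureDeriv e K b) θ = (2 * Real.pi * I * ⟪e, θ⟫) ^ K * 𝓕 b θ := by
  induction K with
  | zero => simp
  | succ K ih =>
    have hsucc : pureDeriv e (K + 1) b = fun v => fderiv ℝ (pureDeriv e K b) v e :=
      funext (pureDeriv_succ e K hb)
    rw [hsucc, fourier_fderiv_apply e ((contDiff_pureDeriv e K hb).differentiable (by simp))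
      (hint K K.le_succ) (hsucc ▸ hint (K + 1) le_rfl), ih fun i hi => hint i (hi.trans K.le_succ)]
    ring

lemma abs_inner_pow_mul_norm_fourier_le (e : E) {b : E → ℂ} (hb : ContDiff ℝ ∞ b) (K : ℕ)
    (hint : ∀ i ≤ K, Integrable (pureDeriv e i b)) (θ : E) :
    |⟪e, θ⟫| ^ K * ‖𝓕 b θ‖ ≤ ∫ v, ‖pureDeriv e K b v‖ := by
  have hfactor : |⟪e, θ⟫| ≤ ‖2 * Real.pi * I * ⟪e, θ⟫‖ := by
    simp only [norm_mul, Complex.norm_real, Complex.norm_I, Real.norm_eq_abs, Complex.norm_ofNat,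
      abs_of_pos Real.pi_pos]
    nlinarith [Real.pi_gt_three, abs_nonneg ⟪e, θ⟫]
  calc |⟪e, θ⟫| ^ K * ‖𝓕 b θ‖ ≤ ‖2 * Real.pi * I * ⟪e, θ⟫‖ ^ K * ‖𝓕 b θ‖ := by gcongr
    _ = ‖𝓕 (pureDeriv e K b) θ‖ := by
        rw [fourier_pureDeriv e hb K hint, norm_mul (_ ^ K), norm_pow]
    _ ≤ _ := norm_fourier_le_integral_norm _ θ

lemma one_add_norm_pow_mul_norm_fourier_le (K : ℕ) {b : E → ℂ} (hb : ContDiff ℝ ∞ b)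
    (hint : ∀ j, ∀ i ≤ K, Integrable (pureDeriv (β j) i b)) {M : ℝ}
    (hM₀ : ∫ v, ‖b v‖ ≤ M) (hM : ∀ j, ∫ v, ‖pureDeriv (β j) K b v‖ ≤ M) (θ : E) :
    (1 + ‖θ‖) ^ K * ‖𝓕 b θ‖ ≤ (1 + Fintype.card ι) ^ K * M := by
  rcases one_add_norm_le_or_exists_le_abs_inner β θ with hθ | ⟨j, hθ⟩
  · gcongr
    exact (norm_fourier_le_integral_norm b θ).trans hM₀
  · calc (1 + ‖θ‖) ^ K * ‖𝓕 b θ‖ ≤ ((1 + Fintype.card ι) * |⟪β j, θ⟫|) ^ K * ‖𝓕 b θ‖ := by gcongr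
      _ = (1 + Fintype.card ι) ^ K * (|⟪β j, θ⟫| ^ K * ‖𝓕 b θ‖) := by rw [mul_pow]; ring
      _ ≤ (1 + Fintype.card ι) ^ K * M := by
          gcongr
          exact (abs_inner_pow_mul_norm_fourier_le (β j) hb K (hint j) θ).trans (hM j)

lemma integrable_fourier_of_decay {b : E → ℂ} (hint : Integrable b) {K : ℕ}
    (hK : Module.finrank ℝ E < K) {C : ℝ} (hdecay : ∀ θ, (1 + ‖θ‖) ^ K * ‖𝓕 b θ‖ ≤ C) :
    Integrable (𝓕 b) := by
  have hjapanese := integrable_one_add_norm (E := E) (μ := volume) (r := K) (by exact_mod_cast hK)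
  refine (hjapanese.const_mul C).mono' ?_ (.of_forall fun θ => ?_)
  · exact (VectorFourier.fourierIntegral_continuous Real.continuous_fourierChar
      (L := innerₗ E) continuous_inner hint).aestronglyMeasurable
  · rw [Real.rpow_neg (by positivity), Real.rpow_natCast, ← div_eq_mul_inv,
      le_div_iff₀' (by positivity)]
    exact hdecay θ

end Fourier

/-! ### Localized symbol differences -/

section LocalDiff

variable {E : Type*} [NormedAddCommGroup E] [InnerProductSpace ℝ E]
  {ι : Type*} [Fintype ι] (β : OrthonormalBasis ι ℝ E)

/-- The oscillation of `A` around the point `p`, cut off by the window `φ`. -/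
def localDiff (φ A : E → ℂ) (p w : E) : ℂ := (A (w + p) - A p) * φ w

lemma opNorm_le_card_mul {L : E →L[ℝ] ℂ} {C : ℝ} (hC : 0 ≤ C) (hL : ∀ j, ‖L (β j)‖ ≤ C) :
    ‖L‖ ≤ Fintype.card ι * C := by
  refine L.opNorm_le_bound (by positivity) fun w => ?_
  conv_lhs => rw [← β.sum_repr' w, map_sum]
  calc _ ≤ ∑ _j : ι, C * ‖w‖ := norm_sum_le_of_le _ fun j _ => by
        rw [map_smul, norm_smul, mul_comm]
        gcongr
        · exact hL j
        · simpa [β.norm_eq_one] using norm_inner_le_norm (𝕜 := ℝ) (β j) w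
    _ = Fintype.card ι * C * ‖w‖ := by simp [mul_assoc]

lemma norm_sub_le_of_norm_pureDeriv_le {A : E → ℂ} (hA : ContDiff ℝ ∞ A) (p : E) {M : ℝ}
    (hM : 0 ≤ M) {N : ℕ} (hderiv : ∀ j w, ‖pureDeriv (β j) 1 A (w + p)‖ ≤ M * (1 + ‖w‖) ^ N)
    (w : E) : ‖A (w + p) - A p‖ ≤ Fintype.card ι * (M * (1 + ‖w‖) ^ (N + 1)) := by
  have hfderiv : ∀ x ∈ Metric.closedBall p ‖w‖,
      ‖fderiv ℝ A x‖ ≤ Fintype.card ι * (M * (1 + ‖w‖) ^ N) := fun x hx =>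
    opNorm_le_card_mul β (by positivity) fun j => by
      have hxp : ‖x - p‖ ≤ ‖w‖ := mem_closedBall_iff_norm.1 hx
      have hj := hderiv j (x - p)
      rw [sub_add_cancel, pureDeriv_one] at hj
      exact hj.trans (by gcongr)
  have hmean := (convex_closedBall p ‖w‖).norm_image_sub_le_of_norm_fderiv_le (𝕜 := ℝ)
    (fun x _ => (hA.differentiable (by simp)) x) hfderiv (Metric.mem_closedBall_self (by simp))
    (show w + p ∈ Metric.closedBall p ‖w‖ by simp)
  rw [add_sub_cancel_right] at hmean
  calc _ ≤ _ := hmean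
    _ ≤ Fintype.card ι * (M * (1 + ‖w‖) ^ N) * (1 + ‖w‖) := by gcongr; linarith
    _ = _ := by ring

lemma norm_pureDeriv_sub_le {A : E → ℂ} (hA : ContDiff ℝ ∞ A) (p : E) {M : ℝ} (hM : 0 ≤ M)
    {N K : ℕ} (hderiv : ∀ j, ∀ i < K + 1, ∀ w,
      ‖pureDeriv (β j) (i + 1) A (w + p)‖ ≤ M * (1 + ‖w‖) ^ N)
    (j : ι) {i : ℕ} (hi : i ≤ K + 1) (w : E) :
    ‖pureDeriv (β j) i (fun w => A (w + p) - A p) w‖ ≤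
      (1 + Fintype.card ι) * (M * (1 + ‖w‖) ^ (N + 1)) := by
  have hp : ContDiff ℝ ∞ fun w => A (w + p) := hA.comp (contDiff_id.add contDiff_const)
  rcases i with _ | i
  · rw [pureDeriv_zero]
    refine (norm_sub_le_of_norm_pureDeriv_le β hA p hM
      (fun j w => hderiv j 0 K.succ_pos w) w).trans ?_
    gcongr
    linarith
  · rw [pureDeriv_sub_const _ _ hp]
    have htranslate := pureDeriv_comp_affine (β j) (i + 1) (ContinuousLinearMap.id ℝ E) p hA w
    simp only [ContinuousLinearMap.id_apply] at htranslate
    rw [htranslate]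
    calc _ ≤ M * (1 + ‖w‖) ^ N := hderiv j i hi w
      _ ≤ 1 * (M * (1 + ‖w‖) ^ (N + 1)) := by
          rw [one_mul]
          gcongr
          · simp
          · exact N.le_succ
      _ ≤ _ := by gcongr; simp

lemma exists_norm_pureDeriv_localDiff_le (φ : 𝓢(E, ℂ)) (N K r : ℕ) :
    ∃ C, 0 ≤ C ∧ ∀ A : E → ℂ, ContDiff ℝ ∞ A → ∀ (p : E) (M : ℝ), 0 ≤ M →
      (∀ j, ∀ i < K + 1, ∀ w, ‖pureDeriv (β j) (i + 1) A (w + p)‖ ≤ M * (1 + ‖w‖) ^ N) →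
      ∀ j, ∀ i ≤ K + 1, ∀ w,
        ‖pureDeriv (β j) i (localDiff φ A p) w‖ ≤ C * M * (1 + ‖w‖) ^ (-r : ℝ) := by
  set S : ℝ := 2 ^ (N + 1 + r) *
    (Finset.Iic (N + 1 + r, K + 1)).sup (fun m => SchwartzMap.seminorm ℝ m.1 m.2) φ
  refine ⟨2 ^ (K + 1) * ((1 + Fintype.card ι) * S), by positivity,
    fun A hA p M hM hderiv j i hi w => ?_⟩
  have hwindow : ∀ l ≤ i, ‖pureDeriv (β j) l φ w‖ ≤ S / (1 + ‖w‖) ^ (N + 1 + r) := fun l hl => by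
    rw [le_div_iff₀' (by positivity)]
    refine le_trans ?_ (φ.one_add_le_sup_seminorm_apply (𝕜 := ℝ)
      (m := (N + 1 + r, K + 1)) le_rfl (hl.trans hi) w)
    gcongr
    simpa [β.norm_eq_one] using norm_pureDeriv_le (β j) l φ w
  have hproduct := norm_pureDeriv_mul_le (β j) i
    ((hA.comp (contDiff_id.add contDiff_const)).sub contDiff_const) φ.smooth' w
    (fun l hl => norm_pureDeriv_sub_le β hA p hM hderiv j (hl.trans hi) w) hwindow
  calc _ ≤ _ := hproduct
    _ ≤ 2 ^ (K + 1) * ((1 + Fintype.card ι) * (M * (1 + ‖w‖) ^ (N + 1)) *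
          (S / (1 + ‖w‖) ^ (N + 1 + r))) := by
        gcongr
        exact one_le_two
    _ = _ := by
        rw [Real.rpow_neg (by positivity), Real.rpow_natCast]
        field_simp
        ring

variable [FiniteDimensional ℝ E] [MeasurableSpace E] [BorelSpace E]

lemma exists_fourier_localDiff_decay [Nonempty ι] (φ : 𝓢(E, ℂ)) (N K : ℕ) :
    ∃ C, 0 ≤ C ∧ ∀ A : E → ℂ, ContDiff ℝ ∞ A → ∀ (p : E) (M : ℝ), 0 ≤ M →
      (∀ j, ∀ i < K + 1, ∀ w, ‖pureDeriv (β j) (i + 1) A (w + p)‖ ≤ M * (1 + ‖w‖) ^ N) →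
      Integrable (localDiff φ A p) ∧
        ∀ θ, (1 + ‖θ‖) ^ (K + 1) * ‖𝓕 (localDiff φ A p) θ‖ ≤ C * M := by
  obtain ⟨C, hC, hbound⟩ :=
    exists_norm_pureDeriv_localDiff_le β φ N K (Module.finrank ℝ E + 1)
  set J : ℝ := ∫ w : E, (1 + ‖w‖) ^ (-((Module.finrank ℝ E + 1 : ℕ) : ℝ))
  have hjapanese : Integrable fun w : E => (1 + ‖w‖) ^ (-((Module.finrank ℝ E + 1 : ℕ) : ℝ)) :=
    integrable_one_add_norm (by simp)
  refine ⟨(1 + Fintype.card ι) ^ (K + 1) * (C * J), by positivity,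
    fun A hA p M hM hderiv => ?_⟩
  have hsmooth : ContDiff ℝ ∞ (localDiff φ A p) :=
    ((hA.comp (contDiff_id.add contDiff_const)).sub contDiff_const).mul φ.smooth'
  have hint : ∀ j, ∀ i ≤ K + 1, Integrable (pureDeriv (β j) i (localDiff φ A p)) :=
    fun j i hi => (hjapanese.const_mul (C * M)).mono'
      (contDiff_pureDeriv _ i hsmooth).continuous.aestronglyMeasurable
      (.of_forall (hbound A hA p M hM hderiv j i hi))
  have hintegral : ∀ j, ∀ i ≤ K + 1,
      ∫ w, ‖pureDeriv (β j) i (localDiff φ A p) w‖ ≤ C * M * J := fun j i hi => by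
    rw [← integral_const_mul]
    exact integral_mono (hint j i hi).norm (hjapanese.const_mul _)
      (hbound A hA p M hM hderiv j i hi)
  obtain ⟨j₀⟩ := ‹Nonempty ι›
  refine ⟨by simpa using hint j₀ 0 (Nat.zero_le _), fun θ => ?_⟩
  refine (one_add_norm_pow_mul_norm_fourier_le β (K + 1) hsmooth hint
    (by simpa using hintegral j₀ 0 (Nat.zero_le _)) (fun j => hintegral j _ le_rfl) θ).trans_eq ?_
  ring

end LocalDiff

/-! ### Gaussians -/

section Gaussian

variable {E : Type*} [NormedAddCommGroup E]

/-- The Gaussian `e^{-c|w|²}`. -/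
def gaussian (c : ℝ) (w : E) : ℝ := Real.exp (-c * ‖w‖ ^ 2)

lemma gaussian_add (c d : ℝ) (w : E) : gaussian (c + d) w = gaussian c w * gaussian d w := by
  rw [gaussian, gaussian, gaussian, ← Real.exp_add]
  ring_nf

lemma exists_one_add_norm_pow_mul_gaussian_le {c : ℝ} (hc : 0 < c) (m : ℕ) :
    ∃ C, ∀ w : E, (1 + ‖w‖) ^ m * gaussian c w ≤ C := by
  refine ⟨m.factorial * Real.exp (1 + 1 / (4 * c)), fun w => ?_⟩
  have hpow : (1 + ‖w‖) ^ m ≤ m.factorial * Real.exp (1 + ‖w‖) := by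
    rw [← div_le_iff₀' (by positivity)]
    exact Real.pow_div_factorial_le_exp _ (by positivity) m
  have hsquare : 1 + ‖w‖ + -c * ‖w‖ ^ 2 ≤ 1 + 1 / (4 * c) := by
    have hnonneg : 0 ≤ (2 * c * ‖w‖ - 1) ^ 2 / (4 * c) := by positivity
    have hexpand : (2 * c * ‖w‖ - 1) ^ 2 / (4 * c) = c * ‖w‖ ^ 2 - ‖w‖ + 1 / (4 * c) := by
      field_simp
      ring
    linarith
  calc _ ≤ m.factorial * Real.exp (1 + ‖w‖) * Real.exp (-c * ‖w‖ ^ 2) := by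
        unfold gaussian
        gcongr
    _ = m.factorial * Real.exp (1 + ‖w‖ + -c * ‖w‖ ^ 2) := by
        rw [mul_assoc, ← Real.exp_add]
    _ ≤ _ := by gcongr

variable [InnerProductSpace ℝ E]

lemma contDiff_gaussian (c : ℝ) : ContDiff ℝ ∞ fun w : E => gaussian c w :=
  Real.contDiff_exp.comp (contDiff_const.mul (contDiff_norm_sq ℝ))

lemma exists_norm_iteratedFDeriv_gaussian_le (c : ℝ) (n : ℕ) :
    ∃ (C : ℝ) (m : ℕ), 0 ≤ C ∧ ∀ w : E,
      ‖iteratedFDeriv ℝ n (gaussian c) w‖ ≤ C * ((1 + ‖w‖) ^ m * gaussian c w) := by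
  have htemperate : (fun w : E => -c * ‖w‖ ^ 2).HasTemperateGrowth :=
    (Function.HasTemperateGrowth.const (-c)).mul (Function.hasTemperateGrowth_norm_sq E)
  obtain ⟨m, D, hD, hgrowth⟩ := htemperate.norm_iteratedFDeriv_le_uniform n
  refine ⟨n.factorial * (D + 1) ^ n, m * n, by positivity, fun w => ?_⟩
  have hcomp := norm_iteratedFDeriv_comp_le (n := n) (C := gaussian c w)
    (D := (D + 1) * (1 + ‖w‖) ^ m) Real.contDiff_exp htemperate.1 (by exact_mod_cast le_top) w
    (fun i _ => ?_) (fun i hi hin => ?_)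
  · refine hcomp.trans_eq ?_
    rw [mul_pow, ← pow_mul]
    ring
  · rw [norm_iteratedFDeriv_eq_norm_iteratedDeriv, iteratedDeriv_eq_iterate, Real.iter_deriv_exp,
      Real.norm_of_nonneg (Real.exp_pos _).le, gaussian]
  · refine (hgrowth i hin w).trans ?_
    have hbase : (1 : ℝ) ≤ (D + 1) * (1 + ‖w‖) ^ m :=
      one_le_mul_of_one_le_of_one_le (by linarith) (one_le_pow₀ (by simp))
    calc D * (1 + ‖w‖) ^ m ≤ (D + 1) * (1 + ‖w‖) ^ m := by gcongr; linarith
      _ ≤ _ := le_self_pow₀ hbase (by omega)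

/-- The Gaussian as a Schwartz function. -/
def gaussianSchwartz {c : ℝ} (hc : 0 < c) : 𝓢(E, ℂ) :=
  SchwartzMap.postcompCLM (𝕜 := ℝ) Complex.ofRealCLM
    { toFun := gaussian c
      smooth' := contDiff_gaussian c
      decay' := fun k n => by
        obtain ⟨C, m, hC, hderiv⟩ := exists_norm_iteratedFDeriv_gaussian_le (E := E) c n
        obtain ⟨B, hB⟩ := exists_one_add_norm_pow_mul_gaussian_le (E := E) hc (k + m)
        refine ⟨C * B, fun w => ?_⟩
        calc _ ≤ (1 + ‖w‖) ^ k * (C * ((1 + ‖w‖) ^ m * gaussian c w)) := by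
              gcongr
              · linarith
              · exact hderiv w
          _ = C * ((1 + ‖w‖) ^ (k + m) * gaussian c w) := by ring
          _ ≤ C * B := by gcongr; exact hB w }

@[simp]
lemma gaussianSchwartz_apply {c : ℝ} (hc : 0 < c) (w : E) :
    gaussianSchwartz hc w = gaussian c w := rfl

/-- The Gaussian window `e^{-π|w|²}`, which is its own Fourier transform. -/
def window : 𝓢(E, ℂ) := gaussianSchwartz Real.pi_pos

/-- The pointwise square root of `window`. Splitting the window into two such factors leaves one to
localize the symbol and one to localize the functions. -/
def sqrtWindow : 𝓢(E, ℂ) := gaussianSchwartz (half_pos Real.pi_pos)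

lemma window_apply (w : E) : window w = gaussian Real.pi w := rfl

lemma sqrtWindow_mul_self (w : E) : sqrtWindow w * sqrtWindow w = window w := by
  simp only [sqrtWindow, window, gaussianSchwartz_apply]
  rw [← Complex.ofReal_mul, ← gaussian_add, add_halves]

lemma conj_window (w : E) : (starRingEnd ℂ) (window w) = window w := Complex.conj_ofReal _

lemma conj_sqrtWindow (w : E) : (starRingEnd ℂ) (sqrtWindow w) = sqrtWindow w :=
  Complex.conj_ofReal _

variable [FiniteDimensional ℝ E] [MeasurableSpace E] [BorelSpace E]

lemma fourier_window (w : E) : 𝓕 (⇑(window : 𝓢(E, ℂ))) w = window w := by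
  have hpi : (Real.pi : ℂ) ≠ 0 := by exact_mod_cast Real.pi_ne_zero
  have hfourier := fourier_gaussian_innerProductSpace (V := E) (b := (Real.pi : ℂ))
    (by simpa using Real.pi_pos) w
  rw [div_self hpi, Complex.one_cpow, one_mul] at hfourier
  have hwindow : ⇑(window : 𝓢(E, ℂ)) = fun v => cexp (-(Real.pi : ℂ) * (‖v‖ : ℂ) ^ 2) := by
    funext v
    simp [window_apply, gaussian]
  rw [hwindow, hfourier]
  congr 1
  field_simp

end Gaussian

/-! ### The Gabor transform -/

section Gabor

variable {V : Type*} [NormedAddCommGroup V] [InnerProductSpace ℝ V]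

/-- The translate of `f` by `-z`, cut off by `φ`, as a Schwartz function. -/
def windowed (φ f : 𝓢(V, ℂ)) (z : V) : 𝓢(V, ℂ) :=
  SchwartzMap.smulLeftCLM ℂ φ (SchwartzMap.compSubConstCLM ℂ (-z) f)

lemma windowed_apply (φ f : 𝓢(V, ℂ)) (z u : V) : windowed φ f z u = φ u * f (u + z) := by
  rw [windowed, SchwartzMap.smulLeftCLM_apply_apply φ.hasTemperateGrowth,
    SchwartzMap.compSubConstCLM_apply, sub_neg_eq_add, smul_eq_mul]

variable [FiniteDimensional ℝ V] [MeasurableSpace V] [BorelSpace V]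

lemma integrable_window_mul (φ f : 𝓢(V, ℂ)) (z : V) : Integrable fun u => φ u * f (u + z) := by
  simp only [← windowed_apply]
  exact (windowed φ f z).integrable

/-- The Gabor (short-time Fourier) transform of `f` with window `φ`, at the position `z` and the
frequency `ζ`. The phase is normalized at `z`: the integration variable is the offset from `z`. -/
def gabor (φ f : V → ℂ) (z ζ : V) : ℂ := 𝓕 (fun u => φ u * f (u + z)) ζ

lemma gabor_eq_fourier_windowed (φ f : 𝓢(V, ℂ)) (z ζ : V) :
    gabor φ f z ζ = 𝓕 (windowed φ f z) ζ := by
  rw [gabor, SchwartzMap.fourier_coe]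
  simp only [← windowed_apply]

lemma stronglyMeasurable_gabor {φ f : V → ℂ} (hφ : Continuous φ) (hf : Continuous f) :
    StronglyMeasurable fun p : V × V => gabor φ f p.1 p.2 := by
  have hintegrand : StronglyMeasurable fun q : (V × V) × V =>
      expi (-⟪q.2, q.1.2⟫) * (φ q.2 * f (q.2 + q.1.1)) :=
    Continuous.stronglyMeasurable (by fun_prop)
  simpa only [gabor, fourier_eq_integral_expi] using hintegrand.integral_prod_right'

lemma measurable_enorm_sq_gabor (φ f : 𝓢(V, ℂ)) {α : Type*} [MeasurableSpace α] {g h : α → V}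
    (hg : Measurable g) (hh : Measurable h) :
    Measurable fun x => ‖gabor φ f (g x) (h x)‖ₑ ^ 2 :=
  ((stronglyMeasurable_gabor φ.continuous f.continuous).measurable.comp
    (hg.prodMk hh)).enorm.pow_const 2

lemma integrable_norm_sq_schwartz (f : 𝓢(V, ℂ)) : Integrable fun x => ‖f x‖ ^ 2 :=
  (memLp_two_iff_integrable_sq_norm f.continuous.aestronglyMeasurable).1 (f.memLp 2)

lemma lintegral_enorm_sq_schwartz (f : 𝓢(V, ℂ)) :
    ∫⁻ x, ‖f x‖ₑ ^ 2 = ENNReal.ofReal (∫ x, ‖f x‖ ^ 2) := by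
  rw [ofReal_integral_eq_lintegral_ofReal (integrable_norm_sq_schwartz f)
    (.of_forall fun x => by positivity)]
  refine lintegral_congr fun x => ?_
  rw [ENNReal.ofReal_pow (norm_nonneg _), ofReal_norm]

lemma lintegral_enorm_sq_gabor (φ f : 𝓢(V, ℂ)) (z : V) :
    ∫⁻ ζ, ‖gabor φ f z ζ‖ₑ ^ 2 = ∫⁻ u, ‖φ u‖ₑ ^ 2 * ‖f (u + z)‖ₑ ^ 2 := by
  simp_rw [gabor_eq_fourier_windowed]
  rw [lintegral_enorm_sq_schwartz, SchwartzMap.integral_norm_sq_fourier,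
    ← lintegral_enorm_sq_schwartz]
  simp only [windowed_apply, enorm_mul, mul_pow]

lemma lintegral_lintegral_mul_add {G H : V → ℝ≥0∞} (hG : Measurable G) (hH : Measurable H) :
    ∫⁻ z, ∫⁻ u, G u * H (u + z) = (∫⁻ u, G u) * ∫⁻ x, H x := by
  rw [lintegral_lintegral_swap (Measurable.aemeasurable (by fun_prop)), ← lintegral_mul_const _ hG]
  refine lintegral_congr fun u => ?_
  rw [lintegral_const_mul _ (by fun_prop), lintegral_add_left_eq_self H u]

lemma lintegral_weight_mul_gabor_le (φ f : 𝓢(V, ℂ)) {m D : V → ℝ≥0∞} (hm : Measurable m)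
    (hD : Measurable D) (hmod : ∀ v z, m z ≤ D v * m (v + z)) :
    ∫⁻ z, m z * ∫⁻ ζ, ‖gabor φ f z ζ‖ₑ ^ 2 ≤
      (∫⁻ v, D v * ‖φ v‖ₑ ^ 2) * ∫⁻ x, m x * ‖f x‖ₑ ^ 2 := by
  have hφm : Measurable fun v => ‖φ v‖ₑ ^ 2 := φ.continuous.measurable.enorm.pow_const 2
  have hfm : Measurable fun v => ‖f v‖ₑ ^ 2 := f.continuous.measurable.enorm.pow_const 2
  calc _ = ∫⁻ z, ∫⁻ u, m z * (‖φ u‖ₑ ^ 2 * ‖f (u + z)‖ₑ ^ 2) := by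
        refine lintegral_congr fun z => ?_
        rw [lintegral_enorm_sq_gabor, lintegral_const_mul _ (by fun_prop)]
    _ ≤ ∫⁻ z, ∫⁻ u, D u * ‖φ u‖ₑ ^ 2 * (m (u + z) * ‖f (u + z)‖ₑ ^ 2) := by
        refine lintegral_mono fun z => lintegral_mono fun u => ?_
        calc _ ≤ (D u * m (u + z)) * (‖φ u‖ₑ ^ 2 * ‖f (u + z)‖ₑ ^ 2) := by
              gcongr
              exact hmod u z
          _ = _ := by ring
    _ = _ := lintegral_lintegral_mul_add (hD.mul hφm) (hm.mul hfm)

lemma fourier_expi_mul_window_sub (z ζ y : V) :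
    𝓕 (fun ξ : V => expi ⟪z, ξ⟫ * window (ξ - ζ)) y =
      expi (-⟪y - z, ζ⟫) * window (y - z) := by
  rw [fourier_eq_integral_expi, ← integral_add_right_eq_self _ ζ, ← fourier_window (y - z),
    fourier_eq_integral_expi, ← integral_const_mul]
  refine integral_congr_ae (.of_forall fun v => ?_)
  simp only [add_sub_cancel_right]
  rw [← mul_assoc, ← mul_assoc, ← expi_add, ← expi_add]
  congr 2
  simp only [inner_add_left, inner_add_right, inner_sub_left, inner_sub_right, real_inner_comm]
  ring

lemma expi_mul_integral_fourier_eq_gabor (f : 𝓢(V, ℂ)) (z ζ : V) :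
    expi ⟪z, ζ⟫ * ∫ v, expi ⟪z, v⟫ * (window v * 𝓕 f (v + ζ)) =
      gabor window f z ζ := by
  have hwave : Integrable fun ξ : V => expi ⟪z, ξ⟫ * window (ξ - ζ) :=
    integrable_expi_mul (by fun_prop)
      ((window (E := V)).integrable.comp_sub_right ζ)
  calc _ = ∫ v, 𝓕 (⇑f) (v + ζ) * (expi ⟪z, v + ζ⟫ * window (v + ζ - ζ)) := by
        rw [← integral_const_mul, ← SchwartzMap.fourier_coe]
        refine integral_congr_ae (.of_forall fun v => ?_)
        simp only [add_sub_cancel_right, inner_add_right, expi_add]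
        ring
    _ = ∫ v, 𝓕 (⇑f) v * (expi ⟪z, v⟫ * window (v - ζ)) :=
        integral_add_right_eq_self
          (fun v => 𝓕 (⇑f) v * (expi ⟪z, v⟫ * window (v - ζ))) ζ
    _ = ∫ y, f y * (expi (-⟪y - z, ζ⟫) * window (y - z)) := by
        rw [integral_fourier_mul f.integrable hwave]
        simp_rw [fourier_expi_mul_window_sub]
    _ = ∫ u, f (u + z) * (expi (-⟪u + z - z, ζ⟫) * window (u + z - z)) :=
        (integral_add_right_eq_self
          (fun y => f y * (expi (-⟪y - z, ζ⟫) * window (y - z))) z).symm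
    _ = _ := by
        rw [gabor, fourier_eq_integral_expi]
        refine integral_congr_ae (.of_forall fun v => ?_)
        simp only [add_sub_cancel_right]
        ring

end Gabor

/-! ### Phase space -/

section PhaseSpace

variable {V : Type*} [NormedAddCommGroup V]

lemma norm_snd_le_norm_toLp (q : V × V) : ‖q.2‖ ≤ ‖WithLp.toLp 2 q‖ := by
  refine le_of_sq_le_sq ?_ (norm_nonneg _)
  rw [WithLp.prod_norm_sq_eq_of_L2]
  exact le_add_of_nonneg_left (sq_nonneg _)

variable [InnerProductSpace ℝ V]

lemma inner_toLp (p q : V × V) :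
    ⟪WithLp.toLp 2 p, WithLp.toLp 2 q⟫ = ⟪p.1, q.1⟫ + ⟪p.2, q.2⟫ := by
  simp [WithLp.prod_inner_apply]

lemma sqrtWindow_toLp (q : V × V) :
    sqrtWindow (WithLp.toLp 2 q) = sqrtWindow q.1 * sqrtWindow q.2 := by
  simp only [sqrtWindow, gaussianSchwartz_apply, gaussian, WithLp.prod_norm_sq_eq_of_L2, mul_add,
    Real.exp_add, Complex.ofReal_mul, WithLp.toLp_fst, WithLp.toLp_snd]

variable [FiniteDimensional ℝ V] [MeasurableSpace V] [BorelSpace V]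

lemma integral_withLp_prod (F : WithLp 2 (V × V) → ℂ) :
    ∫ w, F w = ∫ q : V × V, F (WithLp.toLp 2 q) :=
  ((WithLp.volume_preserving_toLp V V).integral_comp
    (MeasurableEquiv.toLp 2 (V × V)).measurableEmbedding F).symm

lemma integrable_comp_toLp_iff {F : Type*} [NormedAddCommGroup F] {h : WithLp 2 (V × V) → F} :
    Integrable (fun q : V × V => h (WithLp.toLp 2 q)) ↔ Integrable h :=
  (WithLp.volume_preserving_toLp V V).integrable_comp_emb
    (MeasurableEquiv.toLp 2 (V × V)).measurableEmbedding

lemma fourier_mul_prod (X Y : V → ℂ) (p : V × V) :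
    𝓕 (fun w : WithLp 2 (V × V) => X w.fst * Y w.snd) (WithLp.toLp 2 p) = 𝓕 X p.1 * 𝓕 Y p.2 := by
  rw [fourier_eq_integral_expi, fourier_eq_integral_expi, fourier_eq_integral_expi,
    integral_withLp_prod, ← integral_prod_mul]
  refine integral_congr_ae (.of_forall fun q => ?_)
  simp only [inner_toLp, neg_add, expi_add, WithLp.toLp_fst, WithLp.toLp_snd]
  ring

lemma enorm_integral_mul_prod_le {b : WithLp 2 (V × V) → ℂ} (hb : Continuous b)
    (hint : Integrable b) (hint' : Integrable (𝓕 b)) {X Y : V → ℂ} (hX : Integrable X)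
    (hY : Integrable Y) :
    ‖∫ q : V × V, b (WithLp.toLp 2 q) * (X q.1 * Y q.2)‖ₑ ≤
      ∫⁻ q : V × V, ‖𝓕 b (-WithLp.toLp 2 q)‖ₑ * (‖𝓕 X q.1‖ₑ * ‖𝓕 Y q.2‖ₑ) := by
  set Z : WithLp 2 (V × V) → ℂ := fun w => X w.fst * Y w.snd
  have hZ : Integrable Z := integrable_comp_toLp_iff.1 (hX.mul_prod hY)
  have hinv : Integrable (𝓕⁻ b) := by
    simpa only [← funext (Real.fourierInv_eq_fourier_neg b)] using hint'.comp_neg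
  have hparseval : ∫ w, b w * Z w = ∫ w, 𝓕⁻ b w * 𝓕 Z w := by
    rw [← integral_fourier_mul hinv hZ, hb.fourier_fourierInv_eq hint hint']
  calc _ = ‖∫ q : V × V, 𝓕⁻ b (WithLp.toLp 2 q) * 𝓕 Z (WithLp.toLp 2 q)‖ₑ := by
        rw [← integral_withLp_prod fun w => 𝓕⁻ b w * 𝓕 Z w, ← hparseval, integral_withLp_prod]
        rfl
    _ ≤ _ := enorm_integral_le_lintegral_enorm _
    _ = _ := lintegral_congr fun q => by
        rw [enorm_mul, Real.fourierInv_eq_fourier_neg, fourier_mul_prod, enorm_mul]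

/-- The convolution kernel `C (1 + |q|)^{-K}` on phase space. -/
def decayKernel (C : ℝ) (K : ℕ) (q : V × V) : ℝ≥0∞ :=
  ENNReal.ofReal (C * ((1 + ‖WithLp.toLp 2 q‖) ^ K)⁻¹)

lemma measurable_decayKernel (C : ℝ) (K : ℕ) : Measurable (decayKernel (V := V) C K) := by
  have : Measurable fun q : V × V => ‖WithLp.toLp 2 q‖ :=
    (MeasurableEquiv.toLp 2 (V × V)).measurable.norm
  unfold decayKernel
  fun_prop

lemma lintegral_decayKernel_ne_top (C : ℝ) {K : ℕ}
    (hK : Module.finrank ℝ (WithLp 2 (V × V)) < K) : ∫⁻ q, decayKernel (V := V) C K q ≠ ⊤ := by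
  have hjapanese := integrable_one_add_norm (E := WithLp 2 (V × V)) (μ := volume) (r := K)
    (by exact_mod_cast hK)
  simp_rw [decayKernel, ← Real.rpow_natCast, ← Real.rpow_neg (add_nonneg zero_le_one
    (norm_nonneg _))]
  exact (((integrable_comp_toLp_iff).2 hjapanese).const_mul C).lintegral_lt_top.ne

end PhaseSpace

section Moderate

variable {V : Type*} [NormedAddCommGroup V] [MeasurableSpace V]

/-- `m` is a moderate weight: it varies at most polynomially, with constants `B` and `N`. -/
structure IsModerate (B : ℝ) (N : ℕ) (m : V → ℝ) : Prop where
  measurable : Measurable m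
  pos : ∀ ζ, 0 < m ζ
  le_mul : ∀ v ζ, m ζ ≤ B * (1 + ‖v‖) ^ N * m (v + ζ)

lemma IsModerate.one_le {B : ℝ} {N : ℕ} {m : V → ℝ} (hm : IsModerate B N m) : 1 ≤ B := by
  have hzero := hm.le_mul 0 0
  rw [norm_zero, add_zero, one_pow, mul_one, add_zero] at hzero
  exact (le_mul_iff_one_le_left (hm.pos 0)).1 hzero

lemma IsModerate.le_mul_toLp {B : ℝ} {N : ℕ} {m : V → ℝ} (hm : IsModerate B N m) (q : V × V)
    (ζ : V) : m (q.2 + ζ) ≤ B * m ζ * (1 + ‖WithLp.toLp 2 q‖) ^ N := by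
  have hB : 0 ≤ B := zero_le_one.trans hm.one_le
  have hmζ : 0 ≤ m ζ := (hm.pos ζ).le
  have hmod := hm.le_mul (-q.2) (q.2 + ζ)
  rw [neg_add_cancel_left, norm_neg] at hmod
  calc _ ≤ B * (1 + ‖q.2‖) ^ N * m ζ := hmod
    _ ≤ B * (1 + ‖WithLp.toLp 2 q‖) ^ N * m ζ := by
        gcongr
        exact norm_snd_le_norm_toLp q
    _ = _ := by ring

lemma IsModerate.ofReal_sq_div_le {B : ℝ} {N : ℕ} {m : V → ℝ} (hm : IsModerate B N m) {ε : ℝ}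
    (hε : 0 < ε) (v ζ : V) :
    ENNReal.ofReal (m ζ ^ 2 / ε) ≤
      ENNReal.ofReal ((B * (1 + ‖v‖) ^ N) ^ 2) * ENNReal.ofReal (m (v + ζ) ^ 2 / ε) := by
  rw [← ENNReal.ofReal_mul (by positivity), mul_div_assoc', ← mul_pow]
  have hmζ := (hm.pos ζ).le
  gcongr
  exact hm.le_mul v ζ

end Moderate

/-! ### The freezing error -/

section FreezingError

variable {V : Type*} [NormedAddCommGroup V] [InnerProductSpace ℝ V]

/-- The position half of the integrand of the Rihaczek form, localized around `(z, ζ)`. -/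
def positionFactor (φ f : V → ℂ) (z ζ u : V) : ℂ :=
  expi ⟪u, ζ⟫ * (starRingEnd ℂ) (φ u * f (u + z))

/-- The frequency half of the integrand of the Rihaczek form, localized around `(z, ζ)`; `F` plays
the role of `𝓕 f`. -/
def frequencyFactor (φ F : V → ℂ) (z ζ v : V) : ℂ := expi ⟪z, v⟫ * (φ v * F (v + ζ))

lemma window_factors_eq (f F : V → ℂ) (z ζ : V) (q : V × V) :
    positionFactor window f z ζ q.1 * frequencyFactor window F z ζ q.2 =
      sqrtWindow (WithLp.toLp 2 q) *
        (positionFactor sqrtWindow f z ζ q.1 * frequencyFactor sqrtWindow F z ζ q.2) := by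
  simp only [positionFactor, frequencyFactor, sqrtWindow_toLp, ← sqrtWindow_mul_self, map_mul,
    conj_sqrtWindow]
  ring

variable [MeasurableSpace V] [BorelSpace V] [FiniteDimensional ℝ V]

lemma integrable_positionFactor (φ f : 𝓢(V, ℂ)) (z ζ : V) :
    Integrable (positionFactor φ f z ζ) :=
  integrable_expi_mul (by fun_prop)
    (Complex.conjCLE.integrable_comp_iff.2 (integrable_window_mul φ f z))

lemma integrable_frequencyFactor (φ F : 𝓢(V, ℂ)) (z ζ : V) :
    Integrable (frequencyFactor φ F z ζ) :=
  integrable_expi_mul (by fun_prop) (integrable_window_mul φ F ζ)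

lemma fourier_positionFactor (φ f : V → ℂ) (z ζ θ : V) :
    𝓕 (positionFactor φ f z ζ) θ = (starRingEnd ℂ) (gabor φ f z (ζ - θ)) := by
  rw [gabor, fourier_eq_integral_expi, fourier_eq_integral_expi, ← integral_conj]
  refine integral_congr_ae (.of_forall fun u => ?_)
  simp only [positionFactor]
  rw [map_mul _ (expi _), conj_expi, ← mul_assoc, ← expi_add, inner_sub_right]
  ring_nf

lemma fourier_frequencyFactor (φ F : V → ℂ) (z ζ τ : V) :
    𝓕 (frequencyFactor φ F z ζ) τ = gabor φ F ζ (τ - z) := by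
  rw [gabor, fourier_eq_integral_expi, fourier_eq_integral_expi]
  refine integral_congr_ae (.of_forall fun v => ?_)
  simp only [frequencyFactor]
  rw [← mul_assoc, ← expi_add, inner_sub_right, real_inner_comm z v]
  ring_nf

/-- The error of freezing the symbol `A` at the point `(z, ζ)` in the localized form of `f`, `F`. -/
def freezingError (A : WithLp 2 (V × V) → ℂ) (f F : V → ℂ) (z ζ : V) : ℂ :=
  ∫ q : V × V, (A (WithLp.toLp 2 q + WithLp.toLp 2 (z, ζ)) - A (WithLp.toLp 2 (z, ζ))) *
    (positionFactor window f z ζ q.1 * frequencyFactor window F z ζ q.2)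

lemma exists_enorm_freezingError_le {ι : Type*} [Fintype ι] [Nonempty ι]
    (β : OrthonormalBasis ι ℝ (WithLp 2 (V × V))) {K : ℕ}
    (hK : Module.finrank ℝ (WithLp 2 (V × V)) < K + 1) (B : ℝ) (N : ℕ) :
    ∃ C, ∀ A : WithLp 2 (V × V) → ℂ, ContDiff ℝ ∞ A → ∀ m : V → ℝ, IsModerate B N m →
      (∀ j, ∀ i < K + 1, ∀ q : V × V, ‖pureDeriv (β j) (i + 1) A (WithLp.toLp 2 q)‖ ≤ m q.2) →
      ∀ (f F : 𝓢(V, ℂ)) (z ζ : V), ‖freezingError A f F z ζ‖ₑ ≤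
        ∫⁻ q : V × V, decayKernel C (K + 1) q * (ENNReal.ofReal (m ζ) *
          (‖gabor sqrtWindow f z (ζ - q.1)‖ₑ * ‖gabor sqrtWindow F ζ (q.2 - z)‖ₑ)) := by
  obtain ⟨C, hC, hdecay⟩ := exists_fourier_localDiff_decay β sqrtWindow N K
  refine ⟨C * B, fun A hA m hm hderiv f F z ζ => ?_⟩
  have hB : 0 ≤ B := zero_le_one.trans hm.one_le
  set p : WithLp 2 (V × V) := WithLp.toLp 2 (z, ζ)
  obtain ⟨hint, hfourier⟩ := hdecay A hA p (B * m ζ) (mul_nonneg hB (hm.pos ζ).le)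
    fun j i hi w => (hderiv j i hi _).trans (hm.le_mul_toLp (WithLp.ofLp w) ζ)
  have hcont : Continuous (localDiff sqrtWindow A p) :=
    ((hA.continuous.comp (continuous_add_const p)).sub continuous_const).mul
      (sqrtWindow (E := WithLp 2 (V × V))).continuous
  have hkernel : ∀ q, ‖𝓕 (localDiff sqrtWindow A p) (-WithLp.toLp 2 q)‖ₑ ≤
      decayKernel (C * B) (K + 1) q * ENNReal.ofReal (m ζ) := fun q => by
    rw [decayKernel, ← ofReal_norm, ← ENNReal.ofReal_mul (by positivity)]
    refine ENNReal.ofReal_le_ofReal ?_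
    rw [mul_right_comm, ← div_eq_mul_inv, le_div_iff₀' (by positivity), mul_assoc C]
    simpa only [norm_neg] using hfourier (-WithLp.toLp 2 q)
  calc _ = ‖∫ q : V × V, localDiff sqrtWindow A p (WithLp.toLp 2 q) *
          (positionFactor sqrtWindow f z ζ q.1 * frequencyFactor sqrtWindow F z ζ q.2)‖ₑ := by
        simp only [freezingError, window_factors_eq, localDiff, p, mul_assoc]
    _ ≤ _ := enorm_integral_mul_prod_le hcont hint (integrable_fourier_of_decay hint hK hfourier)
        (integrable_positionFactor _ f z ζ) (integrable_frequencyFactor _ F z ζ)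
    _ ≤ _ := lintegral_mono fun q => by
        rw [fourier_positionFactor, fourier_frequencyFactor, RCLike.enorm_conj,
          ← mul_assoc (decayKernel _ _ _)]
        gcongr
        exact hkernel q

lemma ofReal_mul_enorm_mul_le {m ε : ℝ} (hm : 0 ≤ m) (hε : 0 < ε) (x y : ℂ) :
    ENNReal.ofReal m * (‖x‖ₑ * ‖y‖ₑ) ≤
      ENNReal.ofReal ε * ‖x‖ₑ ^ 2 + ENNReal.ofReal (m ^ 2 / ε) * ‖y‖ₑ ^ 2 := by
  simp only [← ofReal_norm]
  rw [← ENNReal.ofReal_mul (by positivity), ← ENNReal.ofReal_mul (by positivity),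
    ← ENNReal.ofReal_pow (by positivity), ← ENNReal.ofReal_pow (by positivity),
    ← ENNReal.ofReal_mul (by positivity), ← ENNReal.ofReal_mul (by positivity),
    ← ENNReal.ofReal_add (by positivity) (by positivity)]
  refine ENNReal.ofReal_le_ofReal ?_
  have hsquare : 0 ≤ (ε * ‖x‖ - m * ‖y‖) ^ 2 / ε := by positivity
  have hexpand : (ε * ‖x‖ - m * ‖y‖) ^ 2 / ε =
      ε * ‖x‖ ^ 2 + m ^ 2 / ε * ‖y‖ ^ 2 - 2 * (m * (‖x‖ * ‖y‖)) := by
    field_simp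
    ring
  have hnonneg : 0 ≤ m * (‖x‖ * ‖y‖) := by positivity
  linarith

lemma lintegral_prod_weight_mul_gabor_le (φ f : 𝓢(V, ℂ)) {a D : V → ℝ≥0∞} (ha : Measurable a)
    (hD : Measurable D) (hmod : ∀ v z, a z ≤ D v * a (v + z)) {e : V → V}
    (he : MeasurePreserving e) :
    ∫⁻ p : V × V, a p.1 * ‖gabor φ f p.1 (e p.2)‖ₑ ^ 2 ≤
      (∫⁻ v, D v * ‖φ v‖ₑ ^ 2) * ∫⁻ x, a x * ‖f x‖ₑ ^ 2 := by
  have hmeas : Measurable fun p : V × V => a p.1 * ‖gabor φ f p.1 (e p.2)‖ₑ ^ 2 :=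
    (ha.comp measurable_fst).mul
      (measurable_enorm_sq_gabor φ f measurable_fst (he.measurable.comp measurable_snd))
  rw [Measure.volume_eq_prod, lintegral_prod _ hmeas.aemeasurable]
  refine le_trans (le_of_eq (lintegral_congr fun z => ?_))
    (lintegral_weight_mul_gabor_le φ f ha hD hmod)
  have hslice : Measurable fun ζ => ‖gabor φ f z ζ‖ₑ ^ 2 :=
    measurable_enorm_sq_gabor φ f measurable_const measurable_id
  rw [← he.lintegral_comp hslice]
  exact lintegral_const_mul (a z) (measurable_enorm_sq_gabor φ f measurable_const he.measurable)

/-- The constant by which a `(B, N)`-moderate weight is distorted by the window `φ`. -/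
def moderateConst (B : ℝ) (N : ℕ) (φ : V → ℂ) : ℝ≥0∞ :=
  ∫⁻ v, ENNReal.ofReal ((B * (1 + ‖v‖) ^ N) ^ 2) * ‖φ v‖ₑ ^ 2

lemma moderateConst_ne_top (B : ℝ) (N : ℕ) (φ : 𝓢(V, ℂ)) : moderateConst B N φ ≠ ⊤ := by
  set d := Module.finrank ℝ V + 1
  have hjapanese := integrable_one_add_norm (E := V) (μ := volume) (r := d) (by simp [d])
  set S : ℝ := 2 ^ (N + d) *
    (Finset.Iic (N + d, 0)).sup (fun m => SchwartzMap.seminorm ℝ m.1 m.2) φ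
  refine ne_top_of_le_ne_top (hjapanese.const_mul ((B * S) ^ 2)).lintegral_lt_top.ne
    (lintegral_mono fun v => ?_)
  rw [← ofReal_norm, ← ENNReal.ofReal_pow (norm_nonneg _), ← ENNReal.ofReal_mul (by positivity)]
  refine ENNReal.ofReal_le_ofReal ?_
  rw [Real.rpow_neg (by positivity), Real.rpow_natCast, ← div_eq_mul_inv,
    le_div_iff₀ (by positivity)]
  have hφ : (1 + ‖v‖) ^ (N + d) * ‖φ v‖ ≤ S := by
    simpa only [norm_iteratedFDeriv_zero] using
      φ.one_add_le_sup_seminorm_apply (𝕜 := ℝ) (m := (N + d, 0)) le_rfl le_rfl v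
  have hd : (1 : ℝ) ≤ (1 + ‖v‖) ^ d := one_le_pow₀ (by simp)
  calc (B * (1 + ‖v‖) ^ N) ^ 2 * ‖φ v‖ ^ 2 * (1 + ‖v‖) ^ d
      ≤ (B * (1 + ‖v‖) ^ N) ^ 2 * ‖φ v‖ ^ 2 * ((1 + ‖v‖) ^ d) ^ 2 := by
        gcongr
        exact le_self_pow₀ hd two_ne_zero
    _ = B ^ 2 * ((1 + ‖v‖) ^ (N + d) * ‖φ v‖) ^ 2 := by ring
    _ ≤ B ^ 2 * S ^ 2 := by gcongr
    _ = (B * S) ^ 2 := by ring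

lemma lintegral_position_gabor_le (φ f : 𝓢(V, ℂ)) {B : ℝ} (hB : 1 ≤ B) (N : ℕ) (c : ℝ≥0∞)
    (θ : V) :
    ∫⁻ p : V × V, c * ‖gabor φ f p.1 (p.2 - θ)‖ₑ ^ 2 ≤
      moderateConst B N φ * ∫⁻ x, c * ‖f x‖ₑ ^ 2 := by
  refine lintegral_prod_weight_mul_gabor_le φ f (a := fun _ => c)
    (D := fun v => ENNReal.ofReal ((B * (1 + ‖v‖) ^ N) ^ 2)) measurable_const (by fun_prop)
    (fun v _ => ?_) (e := (· - θ)) (measurePreserving_sub_right volume θ)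
  refine le_mul_of_one_le_left' (ENNReal.one_le_ofReal.2 (one_le_pow₀ ?_))
  exact one_le_mul_of_one_le_of_one_le hB (one_le_pow₀ (by simp))

lemma lintegral_frequency_gabor_le (φ F : 𝓢(V, ℂ)) {B : ℝ} {N : ℕ} {m : V → ℝ}
    (hm : IsModerate B N m) {ε : ℝ} (hε : 0 < ε) (τ : V) :
    ∫⁻ p : V × V, ENNReal.ofReal (m p.2 ^ 2 / ε) * ‖gabor φ F p.2 (τ - p.1)‖ₑ ^ 2 ≤
      moderateConst B N φ * ∫⁻ x, ENNReal.ofReal (m x ^ 2 / ε) * ‖F x‖ₑ ^ 2 := by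
  have hweight : Measurable fun ζ => ENNReal.ofReal (m ζ ^ 2 / ε) :=
    ((hm.measurable.pow_const 2).div_const ε).ennreal_ofReal
  refine le_trans (le_of_eq ?_) (lintegral_prod_weight_mul_gabor_le φ F hweight (by fun_prop)
    (hm.ofReal_sq_div_le hε) (Measure.measurePreserving_sub_left volume τ))
  exact lintegral_prod_swap (μ := volume) (ν := volume) fun p : V × V =>
    ENNReal.ofReal (m p.1 ^ 2 / ε) * ‖gabor φ F p.1 (τ - p.2)‖ₑ ^ 2

lemma lintegral_kernel_mul_gabor_le (φ f F : 𝓢(V, ℂ)) {k : V × V → ℝ≥0∞} (hk : Measurable k)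
    {B : ℝ} {N : ℕ} {m : V → ℝ} (hm : IsModerate B N m) {ε : ℝ} (hε : 0 < ε) :
    ∫⁻ p : V × V, ∫⁻ q : V × V, k q * (ENNReal.ofReal (m p.2) *
        (‖gabor φ f p.1 (p.2 - q.1)‖ₑ * ‖gabor φ F p.2 (q.2 - p.1)‖ₑ)) ≤
      (∫⁻ q, k q) * (moderateConst B N φ * ((∫⁻ x, ENNReal.ofReal ε * ‖f x‖ₑ ^ 2) +
        ∫⁻ x, ENNReal.ofReal (m x ^ 2 / ε) * ‖F x‖ₑ ^ 2)) := by
  set P : (V × V) × (V × V) → ℝ≥0∞ := fun x =>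
    ENNReal.ofReal ε * ‖gabor φ f x.1.1 (x.1.2 - x.2.1)‖ₑ ^ 2
  set Q : (V × V) × (V × V) → ℝ≥0∞ := fun x =>
    ENNReal.ofReal (m x.1.2 ^ 2 / ε) * ‖gabor φ F x.1.2 (x.2.2 - x.1.1)‖ₑ ^ 2
  have hP : Measurable P :=
    (measurable_enorm_sq_gabor φ f (by fun_prop) (by fun_prop)).const_mul _
  have hQ : Measurable Q :=
    (((hm.measurable.comp (by fun_prop)).pow_const 2).div_const ε).ennreal_ofReal.mul
      (measurable_enorm_sq_gabor φ F (by fun_prop) (by fun_prop))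
  have hsections : ∀ q, ∫⁻ p, (P (p, q) + Q (p, q)) ≤
      moderateConst B N φ * ((∫⁻ x, ENNReal.ofReal ε * ‖f x‖ₑ ^ 2) +
        ∫⁻ x, ENNReal.ofReal (m x ^ 2 / ε) * ‖F x‖ₑ ^ 2) := fun q => by
    have hPq : Measurable fun p => P (p, q) := hP.comp (by fun_prop)
    rw [lintegral_add_left hPq, mul_add]
    exact add_le_add (lintegral_position_gabor_le φ f hm.one_le N _ q.1)
      (lintegral_frequency_gabor_le φ F hm hε q.2)
  calc _ ≤ ∫⁻ p : V × V, ∫⁻ q : V × V, k q * (P (p, q) + Q (p, q)) :=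
        lintegral_mono fun p => lintegral_mono fun q => by
          gcongr
          exact ofReal_mul_enorm_mul_le (hm.pos p.2).le hε _ _
    _ = ∫⁻ q : V × V, ∫⁻ p : V × V, k q * (P (p, q) + Q (p, q)) :=
        lintegral_lintegral_swap ((hk.comp measurable_snd).mul (hP.add hQ)).aemeasurable
    _ ≤ ∫⁻ q : V × V, k q * (moderateConst B N φ * ((∫⁻ x, ENNReal.ofReal ε * ‖f x‖ₑ ^ 2) +
          ∫⁻ x, ENNReal.ofReal (m x ^ 2 / ε) * ‖F x‖ₑ ^ 2)) :=
        lintegral_mono fun q => by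
          have hPQ : Measurable fun p => P (p, q) + Q (p, q) := (hP.add hQ).comp (by fun_prop)
          rw [lintegral_const_mul _ hPQ]
          gcongr
          exact hsections q
    _ = _ := lintegral_mul_const _ hk

lemma exists_lintegral_freezingError_le {ι : Type*} [Fintype ι] [Nonempty ι]
    (β : OrthonormalBasis ι ℝ (WithLp 2 (V × V))) {K : ℕ}
    (hK : Module.finrank ℝ (WithLp 2 (V × V)) < K + 1) (B : ℝ) (N : ℕ) :
    ∃ C : ℝ≥0∞, C ≠ ⊤ ∧ ∀ A : WithLp 2 (V × V) → ℂ, ContDiff ℝ ∞ A →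
      ∀ m : V → ℝ, IsModerate B N m →
      (∀ j, ∀ i < K + 1, ∀ q : V × V, ‖pureDeriv (β j) (i + 1) A (WithLp.toLp 2 q)‖ ≤ m q.2) →
      ∀ ε : ℝ, 0 < ε → ∀ f F : 𝓢(V, ℂ), ∫⁻ p : V × V, ‖freezingError A f F p.1 p.2‖ₑ ≤
        C * ((∫⁻ x, ENNReal.ofReal ε * ‖f x‖ₑ ^ 2) +
          ∫⁻ x, ENNReal.ofReal (m x ^ 2 / ε) * ‖F x‖ₑ ^ 2) := by
  obtain ⟨C, hpointwise⟩ := exists_enorm_freezingError_le β hK B N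
  have hmod : moderateConst B N (sqrtWindow (E := V)) ≠ ⊤ := moderateConst_ne_top B N sqrtWindow
  have hker : ∫⁻ q : V × V, decayKernel C (K + 1) q ≠ ⊤ := lintegral_decayKernel_ne_top C hK
  refine ⟨_, ENNReal.mul_ne_top hker hmod, fun A hA m hm hderiv ε hε f F => ?_⟩
  have hconv := lintegral_kernel_mul_gabor_le sqrtWindow f F
    (measurable_decayKernel C (K + 1)) hm hε
  rw [← mul_assoc] at hconv
  refine le_trans (lintegral_mono fun p => ?_) hconv
  exact hpointwise A hA m hm hderiv f F p.1 p.2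

end FreezingError

/-! ### Positivity of the smoothed Rihaczek form -/

section Translation

variable {G : Type*} [AddGroup G] [MeasurableSpace G] [MeasurableAdd₂ G] {μ : Measure G}
  [SFinite μ] [μ.IsAddLeftInvariant]

lemma integrable_mul_comp_add {H k : G → ℂ} (hH : Integrable H μ) (hk : Integrable k μ) :
    Integrable (fun q : G × G => H (q.2 + q.1) * k q.2) (μ.prod μ) := by
  have hshear := (measurePreserving_prod_add μ μ).integrable_comp_of_integrable (hk.mul_prod hH)
  refine hshear.swap.congr (.of_forall fun q => ?_)
  simp [mul_comm]

lemma integral_integral_mul_comp_add {H k : G → ℂ} (hH : Integrable H μ) (hk : Integrable k μ) :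
    ∫ p, ∫ w, H (w + p) * k w ∂μ ∂μ = (∫ w, k w ∂μ) * ∫ p, H p ∂μ := by
  rw [integral_integral_swap (integrable_mul_comp_add hH hk), ← integral_mul_const]
  refine integral_congr_ae (.of_forall fun w => ?_)
  simp only
  rw [integral_mul_const, integral_add_left_eq_self H w, mul_comm]

end Translation

lemma ofReal_integral_le_lintegral_ofReal {α : Type*} [MeasurableSpace α] {μ : Measure α}
    {h : α → ℝ} (hh : Integrable h μ) :
    ENNReal.ofReal (∫ x, h x ∂μ) ≤ ∫⁻ x, ENNReal.ofReal (h x) ∂μ := by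
  rw [integral_eq_lintegral_pos_part_sub_lintegral_neg_part hh]
  exact (ENNReal.ofReal_le_ofReal (sub_le_self _ ENNReal.toReal_nonneg)).trans
    ENNReal.ofReal_toReal_le

section Rihaczek

variable {V : Type*} [NormedAddCommGroup V] [InnerProductSpace ℝ V]

/-- The kernel `e^{-2πi u·v} e^{-π(|u|² + |v|²)}` on phase space: convolution with it turns the
Rihaczek distribution into the spectrogram `|gabor window f|²`. -/
def smoothingKernel (q : V × V) : ℂ := expi (-⟪q.1, q.2⟫) * (window q.1 * window q.2)

variable [FiniteDimensional ℝ V] [MeasurableSpace V] [BorelSpace V]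

lemma integral_gaussian_pos {c : ℝ} (hc : 0 < c) : 0 < ∫ v : V, gaussian c v := by
  simp only [gaussian]
  rw [GaussianFourier.integral_rexp_neg_mul_sq_norm hc]
  positivity

lemma integrable_smoothingKernel : Integrable (smoothingKernel (V := V)) :=
  integrable_expi_mul (by fun_prop)
    ((window (E := V)).integrable.mul_prod (window (E := V)).integrable)

lemma integral_smoothingKernel :
    ∫ q, smoothingKernel (V := V) q = ((∫ v : V, gaussian (Real.pi + Real.pi) v : ℝ) : ℂ) := by
  have hint := integrable_smoothingKernel (V := V)
  rw [Measure.volume_eq_prod] at hint ⊢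
  rw [integral_prod _ hint, ← integral_complex_ofReal]
  refine integral_congr_ae (.of_forall fun u => ?_)
  calc ∫ v, smoothingKernel (u, v) = window u * 𝓕 (⇑(window (E := V))) u := by
        rw [fourier_eq_integral_expi, ← integral_const_mul]
        refine integral_congr_ae (.of_forall fun v => ?_)
        simp only [smoothingKernel]
        rw [real_inner_comm]
        ring
    _ = _ := by
        rw [fourier_window]
        simp only [window_apply, gaussian_add, Complex.ofReal_mul]

/-- The Rihaczek distribution of `f`. Integrating a symbol against it gives `⟨Op^{KN}(σ) f, f⟩`. -/
def rihaczek (f : 𝓢(V, ℂ)) (q : V × V) : ℂ :=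
  expi ⟪q.1, q.2⟫ * (𝓕 f q.2 * (starRingEnd ℂ) (f q.1))

lemma integrable_rihaczek (f : 𝓢(V, ℂ)) : Integrable (rihaczek f) := by
  have hconj : Integrable fun v => (starRingEnd ℂ) (f v) :=
    Complex.conjCLE.integrable_comp_iff.2 f.integrable
  refine integrable_expi_mul (by fun_prop) ((hconj.mul_prod (𝓕 f).integrable).congr ?_)
  exact .of_forall fun q => mul_comm _ _

lemma integrable_mul_rihaczek (f : 𝓢(V, ℂ)) {a : V × V → ℂ} (ha : Continuous a) {B : ℝ}
    (hB : ∀ q, ‖a q‖ ≤ B) : Integrable fun q => a q * rihaczek f q :=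
  (integrable_rihaczek f).bdd_mul ha.aestronglyMeasurable (.of_forall hB)

lemma integral_expi_mul_fourier (f : 𝓢(V, ℂ)) (x : V) : ∫ ξ, expi ⟪x, ξ⟫ * 𝓕 f ξ = f x := by
  have hinv : (𝓕⁻ (𝓕 f) : 𝓢(V, ℂ)) x = f x := by rw [FourierTransform.fourierInv_fourier_eq]
  rw [← hinv, SchwartzMap.fourierInv_coe, Real.fourierInv_eq_fourier_neg,
    fourier_eq_integral_expi]
  simp only [inner_neg_right, neg_neg, real_inner_comm]

lemma integral_rihaczek (f : 𝓢(V, ℂ)) : ∫ q, rihaczek f q = ((∫ x, ‖f x‖ ^ 2 : ℝ) : ℂ) := by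
  have hint := integrable_rihaczek f
  rw [Measure.volume_eq_prod] at hint ⊢
  rw [integral_prod _ hint, ← integral_complex_ofReal]
  refine integral_congr_ae (.of_forall fun x => ?_)
  simp only [rihaczek, ← mul_assoc]
  rw [integral_mul_const, integral_expi_mul_fourier, Complex.mul_conj', Complex.ofReal_pow]

lemma rihaczek_add_mul_smoothingKernel (f : 𝓢(V, ℂ)) (p w : V × V) :
    rihaczek f (w + p) * smoothingKernel w =
      expi ⟪p.1, p.2⟫ * (positionFactor window f p.1 p.2 w.1 *
        frequencyFactor window (𝓕 f : 𝓢(V, ℂ)) p.1 p.2 w.2) := by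
  have hphase : expi ⟪w.1 + p.1, w.2 + p.2⟫ * expi (-⟪w.1, w.2⟫) =
      expi ⟪p.1, p.2⟫ * (expi ⟪w.1, p.2⟫ * expi ⟪p.1, w.2⟫) := by
    rw [← expi_add, ← expi_add, ← expi_add, inner_add_left, inner_add_right, inner_add_right]
    ring_nf
  simp only [rihaczek, smoothingKernel, positionFactor, frequencyFactor, Prod.fst_add,
    Prod.snd_add, map_mul, conj_window]
  linear_combination (window w.1 * window w.2 *
    (𝓕 f (w.2 + p.2) * (starRingEnd ℂ) (f (w.1 + p.1)))) * hphase

lemma integral_positionFactor (φ f : V → ℂ) (z ζ : V) :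
    ∫ u, positionFactor φ f z ζ u = (starRingEnd ℂ) (gabor φ f z ζ) := by
  have hzero := fourier_positionFactor φ f z ζ 0
  simpa [fourier_eq_integral_expi, expi] using hzero

lemma expi_mul_integral_factors (f : 𝓢(V, ℂ)) (z ζ : V) :
    expi ⟪z, ζ⟫ * ∫ q : V × V, positionFactor window f z ζ q.1 *
        frequencyFactor window (𝓕 f : 𝓢(V, ℂ)) z ζ q.2 =
      ((‖gabor window f z ζ‖ ^ 2 : ℝ) : ℂ) := by
  rw [Measure.volume_eq_prod, integral_prod_mul, integral_positionFactor, mul_left_comm]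
  simp only [frequencyFactor]
  rw [expi_mul_integral_fourier_eq_gabor, Complex.conj_mul', Complex.ofReal_pow]

/-- The Rihaczek distribution weighted by the symbol `A`, smoothed by `smoothingKernel`. -/
def smoothedRihaczek (A : WithLp 2 (V × V) → ℂ) (f : 𝓢(V, ℂ)) (p : V × V) : ℂ :=
  ∫ w : V × V, A (WithLp.toLp 2 (w + p)) * rihaczek f (w + p) * smoothingKernel w

lemma smoothedRihaczek_eq {A : WithLp 2 (V × V) → ℂ} (hA : Continuous A) {B : ℝ}
    (hB : ∀ w, ‖A w‖ ≤ B) (f : 𝓢(V, ℂ)) (p : V × V) :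
    smoothedRihaczek A f p = A (WithLp.toLp 2 p) * ((‖gabor window f p.1 p.2‖ ^ 2 : ℝ) : ℂ) +
      expi ⟪p.1, p.2⟫ * freezingError A f (𝓕 f : 𝓢(V, ℂ)) p.1 p.2 := by
  set Z : V × V → ℂ := fun q =>
    positionFactor window f p.1 p.2 q.1 * frequencyFactor window (𝓕 f : 𝓢(V, ℂ)) p.1 p.2 q.2
  have hZ : Integrable Z := (integrable_positionFactor window f p.1 p.2).mul_prod
    (integrable_frequencyFactor window (𝓕 f : 𝓢(V, ℂ)) p.1 p.2)
  have hAZ : Integrable fun q => A (WithLp.toLp 2 q + WithLp.toLp 2 p) * Z q :=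
    hZ.bdd_mul (hA.comp ((WithLp.prod_continuous_toLp 2 V V).add
      continuous_const)).aestronglyMeasurable (.of_forall fun q => hB _)
  have hsmoothed : smoothedRihaczek A f p =
      expi ⟪p.1, p.2⟫ * ∫ q, A (WithLp.toLp 2 q + WithLp.toLp 2 p) * Z q := by
    rw [smoothedRihaczek, ← integral_const_mul]
    refine integral_congr_ae (.of_forall fun q => ?_)
    simp only
    rw [mul_assoc, rihaczek_add_mul_smoothingKernel, WithLp.toLp_add, mul_left_comm]
  have herror : freezingError A f (𝓕 f : 𝓢(V, ℂ)) p.1 p.2 =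
      (∫ q, A (WithLp.toLp 2 q + WithLp.toLp 2 p) * Z q) - A (WithLp.toLp 2 p) * ∫ q, Z q := by
    rw [← integral_const_mul, ← integral_sub hAZ (hZ.const_mul _)]
    exact integral_congr_ae (.of_forall fun q => sub_mul _ _ _)
  rw [hsmoothed, herror, ← expi_mul_integral_factors]
  ring

lemma neg_re_smoothedRihaczek_le {A : WithLp 2 (V × V) → ℝ} (hA : Continuous A)
    (hA0 : ∀ w, 0 ≤ A w) {B : ℝ} (hB : ∀ w, A w ≤ B) (f : 𝓢(V, ℂ)) (p : V × V) :
    -(smoothedRihaczek (fun w => (A w : ℂ)) f p).re ≤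
      ‖freezingError (fun w => (A w : ℂ)) f (𝓕 f : 𝓢(V, ℂ)) p.1 p.2‖ := by
  rw [smoothedRihaczek_eq (by fun_prop) (B := B) fun w => by
    rw [Complex.norm_real, Real.norm_of_nonneg (hA0 w)]
    exact hB w]
  set e := freezingError (fun w => (A w : ℂ)) f (𝓕 f : 𝓢(V, ℂ)) p.1 p.2
  have hspectrogram : 0 ≤ A (WithLp.toLp 2 p) * ‖gabor window f p.1 p.2‖ ^ 2 :=
    mul_nonneg (hA0 _) (by positivity)
  have hphase : |(expi ⟪p.1, p.2⟫ * e).re| ≤ ‖e‖ := by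
    simpa only [norm_mul, norm_expi, one_mul] using Complex.abs_re_le_norm (expi ⟪p.1, p.2⟫ * e)
  rw [Complex.add_re, ← Complex.ofReal_mul, Complex.ofReal_re]
  linarith [neg_abs_le (expi ⟪p.1, p.2⟫ * e).re]

lemma isAddLeftInvariant_volume_prod : (volume : Measure (V × V)).IsAddLeftInvariant := by
  rw [Measure.volume_eq_prod]
  infer_instance

lemma integrable_smoothedRihaczek {A : WithLp 2 (V × V) → ℂ} {f : 𝓢(V, ℂ)}
    (hint : Integrable fun q : V × V => A (WithLp.toLp 2 q) * rihaczek f q) :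
    Integrable (smoothedRihaczek A f) := by
  have := isAddLeftInvariant_volume_prod (V := V)
  exact (integrable_mul_comp_add hint integrable_smoothingKernel).integral_prod_left

lemma integral_smoothedRihaczek {A : WithLp 2 (V × V) → ℂ} {f : 𝓢(V, ℂ)}
    (hint : Integrable fun q : V × V => A (WithLp.toLp 2 q) * rihaczek f q) :
    ∫ p, smoothedRihaczek A f p = ((∫ v : V, gaussian (Real.pi + Real.pi) v : ℝ) : ℂ) *
      ∫ q : V × V, A (WithLp.toLp 2 q) * rihaczek f q := by
  have := isAddLeftInvariant_volume_prod (V := V)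
  rw [← integral_smoothingKernel]
  exact integral_integral_mul_comp_add hint integrable_smoothingKernel

lemma ofReal_neg_re_integral_rihaczek_le {A : WithLp 2 (V × V) → ℝ} (hA : Continuous A)
    (hA0 : ∀ w, 0 ≤ A w) {B : ℝ} (hB : ∀ w, A w ≤ B) (f : 𝓢(V, ℂ)) :
    ENNReal.ofReal (-(∫ q : V × V, (A (WithLp.toLp 2 q) : ℂ) * rihaczek f q).re) ≤
      ENNReal.ofReal (∫ v : V, gaussian (Real.pi + Real.pi) v)⁻¹ *
        ∫⁻ p : V × V, ‖freezingError (fun w => (A w : ℂ)) f (𝓕 f : 𝓢(V, ℂ)) p.1 p.2‖ₑ := by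
  set κ : ℝ := ∫ v : V, gaussian (Real.pi + Real.pi) v
  have hκ : 0 < κ := integral_gaussian_pos (by positivity)
  have hcont : Continuous fun q : V × V => (A (WithLp.toLp 2 q) : ℂ) :=
    Complex.continuous_ofReal.comp (hA.comp (WithLp.prod_continuous_toLp 2 V V))
  have hint := integrable_mul_rihaczek f hcont (B := B) fun q => by
    rw [Complex.norm_real, Real.norm_of_nonneg (hA0 _)]
    exact hB _
  set D := smoothedRihaczek (fun w => (A w : ℂ)) f
  have hD : Integrable D := integrable_smoothedRihaczek hint
  have haverage : -(∫ q : V × V, (A (WithLp.toLp 2 q) : ℂ) * rihaczek f q).re =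
      κ⁻¹ * ∫ p, -(D p).re := by
    have hre : ∫ p, (D p).re = (∫ p, D p).re := integral_re hD
    rw [integral_neg, hre, integral_smoothedRihaczek hint, Complex.re_ofReal_mul, mul_neg,
      inv_mul_cancel_left₀ hκ.ne']
  rw [haverage, ENNReal.ofReal_mul (by positivity)]
  gcongr
  refine (ofReal_integral_le_lintegral_ofReal hD.re.neg).trans (lintegral_mono fun p => ?_)
  rw [← ofReal_norm]
  exact ENNReal.ofReal_le_ofReal (neg_re_smoothedRihaczek_le hA hA0 hB f p)

lemma exists_ofReal_neg_re_integral_rihaczek_le {ι : Type*} [Fintype ι] [Nonempty ι]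
    (β : OrthonormalBasis ι ℝ (WithLp 2 (V × V))) {K : ℕ}
    (hK : Module.finrank ℝ (WithLp 2 (V × V)) < K + 1) (B : ℝ) (N : ℕ) :
    ∃ C : ℝ≥0∞, C ≠ ⊤ ∧ ∀ A : WithLp 2 (V × V) → ℝ, ContDiff ℝ ∞ A → (∀ w, 0 ≤ A w) →
      (∃ b, ∀ w, A w ≤ b) → ∀ m : V → ℝ, IsModerate B N m →
      (∀ j, ∀ i < K + 1, ∀ q : V × V,
        ‖pureDeriv (β j) (i + 1) (fun w => (A w : ℂ)) (WithLp.toLp 2 q)‖ ≤ m q.2) →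
      ∀ ε : ℝ, 0 < ε → ∀ f : 𝓢(V, ℂ),
      ENNReal.ofReal (-(∫ q : V × V, (A (WithLp.toLp 2 q) : ℂ) * rihaczek f q).re) ≤
        C * ((∫⁻ x, ENNReal.ofReal ε * ‖f x‖ₑ ^ 2) +
          ∫⁻ x, ENNReal.ofReal (m x ^ 2 / ε) * ‖𝓕 f x‖ₑ ^ 2) := by
  obtain ⟨C, hC, herror⟩ := exists_lintegral_freezingError_le β hK B N
  refine ⟨ENNReal.ofReal (∫ v : V, gaussian (Real.pi + Real.pi) v)⁻¹ * C,
    ENNReal.mul_ne_top ENNReal.ofReal_ne_top hC,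
    fun A hA hA0 ⟨b, hb⟩ m hm hderiv ε hε f => ?_⟩
  refine (ofReal_neg_re_integral_rihaczek_le hA.continuous hA0 hb f).trans ?_
  rw [mul_assoc]
  gcongr
  exact herror _ (Complex.ofRealCLM.contDiff.comp hA) m hm hderiv ε hε f (𝓕 f)

end Rihaczek

/-! ### Symbols and the weight `1 + |ξ|²` -/

lemma exists_pos_forall_le_mul {ι X : Type*} [Finite ι] {F G : ι → X → ℝ}
    (hG : ∀ a x, 0 ≤ G a x) (h : ∀ a, ∃ C, ∀ x, F a x ≤ C * G a x) :
    ∃ C > 0, ∀ a x, F a x ≤ C * G a x := by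
  choose C hC using h
  obtain ⟨M, hM⟩ := (Set.finite_range C).bddAbove
  refine ⟨max M 1, lt_max_of_lt_right one_pos, fun a x => (hC a x).trans ?_⟩
  exact mul_le_mul_of_nonneg_right ((hM ⟨a, rfl⟩).trans (le_max_left _ _)) (hG a x)

lemma rpow_le_rpow_mul_rpow_of_le_mul {M x y t : ℝ} (hM : 0 < M) (hx : 0 < x) (hy : 0 < y)
    (h : y ≤ M * x) (ht : t ≤ 0) : x ^ t ≤ M ^ (-t) * y ^ t := by
  have hmul : M ^ t * x ^ t ≤ y ^ t := by
    rw [← Real.mul_rpow hM.le hx.le]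
    exact Real.rpow_le_rpow_of_nonpos hy h ht
  rwa [Real.rpow_neg hM.le, ← div_eq_inv_mul, le_div_iff₀' (Real.rpow_pos_of_pos hM t)]

lemma exists_mul_rpow_le_add_mul_rpow {r t ε : ℝ} (hr : r < 0) (ht : t ≤ 0) (hε : 0 < ε) (C : ℝ) :
    ∃ C' > 0, ∀ w : ℝ, 1 ≤ w → C * w ^ r ≤ ε + C' * w ^ t := by
  have htendsto : Filter.Tendsto (fun w : ℝ => C * w ^ r) Filter.atTop (nhds 0) := by
    simpa using (tendsto_rpow_neg_atTop (neg_pos.2 hr)).const_mul C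
  obtain ⟨W, hW⟩ := Filter.eventually_atTop.1 (htendsto.eventually_le_const hε)
  set M := max W 1
  have hM : 0 < M := lt_max_of_lt_right one_pos
  refine ⟨(|C| + 1) * M ^ (-t), by positivity, fun w hw => ?_⟩
  have hw0 : 0 < w := one_pos.trans_le hw
  rcases le_total M w with hMw | hMw
  · have hlarge := hW w ((le_max_left _ _).trans hMw)
    have hnonneg : 0 ≤ (|C| + 1) * M ^ (-t) * w ^ t := by positivity
    linarith
  · have hbase : (1 : ℝ) ≤ M ^ (-t) * w ^ t := by
      simpa using rpow_le_rpow_mul_rpow_of_le_mul hM one_pos hw0 (by simpa using hMw) ht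
    have hdecay : w ^ r ≤ 1 := Real.rpow_le_one_of_one_le_of_nonpos hw hr.le
    calc C * w ^ r ≤ |C| * 1 := by
          gcongr
          exact le_abs_self C
      _ ≤ (|C| + 1) * (M ^ (-t) * w ^ t) := by
          gcongr
          linarith
      _ ≤ _ := by linarith

section Symbols

variable {n : ℕ}

lemma one_le_wt (ξ : Fin n → ℝ) : 1 ≤ wt ξ :=
  le_add_of_nonneg_right (Finset.sum_nonneg fun _ _ => sq_nonneg _)

lemma wt_pos (ξ : Fin n → ℝ) : 0 < wt ξ := one_pos.trans_le (one_le_wt ξ)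

lemma continuous_wt_rpow (t : ℝ) : Continuous fun ξ : Fin n → ℝ => wt ξ ^ t :=
  (show Continuous (wt : (Fin n → ℝ) → ℝ) by unfold wt; fun_prop).rpow_const
    fun ξ => .inl (wt_pos ξ).ne'

lemma wt_smul (l : ℝ) (ξ : Fin n → ℝ) : wt (l • ξ) = 1 + l ^ 2 * ∑ i, ξ i ^ 2 := by
  simp only [wt, Pi.smul_apply, smul_eq_mul, mul_pow, ← Finset.mul_sum]

lemma wt_le_wt_smul {l : ℝ} (hl : 1 ≤ l) (ξ : Fin n → ℝ) : wt ξ ≤ wt (l • ξ) := by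
  rw [wt_smul, wt]
  gcongr
  exact le_mul_of_one_le_left (Finset.sum_nonneg fun _ _ => sq_nonneg _) (one_le_pow₀ hl)

lemma wt_smul_le {l : ℝ} (hl : 1 ≤ l) (ξ : Fin n → ℝ) : wt (l • ξ) ≤ l ^ 2 * wt ξ := by
  rw [wt_smul, wt, mul_add, mul_one]
  gcongr
  exact one_le_pow₀ hl

lemma wt_ofLp (ξ : EuclideanSpace ℝ (Fin n)) : wt (WithLp.ofLp ξ) = 1 + ‖ξ‖ ^ 2 := by
  rw [EuclideanSpace.real_norm_sq_eq, wt]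

lemma wt_ofLp_add_le (v ζ : EuclideanSpace ℝ (Fin n)) :
    wt (WithLp.ofLp (v + ζ)) ≤ 2 * (1 + ‖v‖) ^ 2 * wt (WithLp.ofLp ζ) := by
  rw [wt_ofLp, wt_ofLp]
  have htriangle : ‖v + ζ‖ ^ 2 ≤ (‖v‖ + ‖ζ‖) ^ 2 := by
    gcongr
    exact norm_add_le v ζ
  have hv := norm_nonneg v
  have hmono : (1 + ‖v‖ ^ 2) * (1 + ‖ζ‖ ^ 2) ≤ (1 + ‖v‖) ^ 2 * (1 + ‖ζ‖ ^ 2) := by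
    gcongr
    nlinarith
  nlinarith [sq_nonneg (‖v‖ - ‖ζ‖), mul_nonneg (sq_nonneg ‖v‖) (sq_nonneg ‖ζ‖)]

lemma isModerate_add_mul_wt_rpow {ε C t : ℝ} (hε : 0 < ε) (hC : 0 ≤ C) (ht : t ≤ 0) {k : ℕ}
    (hk : -t ≤ k) :
    IsModerate (2 ^ k) (2 * k) fun ξ : EuclideanSpace ℝ (Fin n) =>
      ε + C * wt (WithLp.ofLp ξ) ^ t where
  measurable := (continuous_const.add (continuous_const.mul
    ((continuous_wt_rpow t).comp (PiLp.continuous_ofLp 2 _)))).measurable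
  pos ζ := add_pos_of_pos_of_nonneg hε (mul_nonneg hC (Real.rpow_nonneg (wt_pos _).le t))
  le_mul v ζ := by
    set M : ℝ := 2 * (1 + ‖v‖) ^ 2
    have hM : 1 ≤ M := by nlinarith [norm_nonneg v]
    have hMk : 2 ^ k * (1 + ‖v‖) ^ (2 * k) = M ^ k := by rw [mul_pow, pow_mul]
    have hwt : wt (WithLp.ofLp ζ) ^ t ≤ M ^ k * wt (WithLp.ofLp (v + ζ)) ^ t := by
      refine (rpow_le_rpow_mul_rpow_of_le_mul (one_pos.trans_le hM) (wt_pos _) (wt_pos _)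
        (wt_ofLp_add_le v ζ) ht).trans ?_
      have hpow : M ^ (-t) ≤ M ^ k := by
        rw [← Real.rpow_natCast]
        exact Real.rpow_le_rpow_of_exponent_le hM hk
      have := Real.rpow_nonneg (wt_pos (WithLp.ofLp (v + ζ))).le t
      gcongr
    rw [hMk, mul_add]
    refine add_le_add (le_mul_of_one_le_left hε.le (one_le_pow₀ hM)) ?_
    rw [mul_left_comm]
    gcongr

lemma foldr_comp_iterate_pd_single (j : Fin n) (i : ℕ) (F : (Fin n → ℝ) → ℂ) {l : List (Fin n)}
    (hl : l.Nodup) :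
    ((l.map fun a => (pd a)^[(Pi.single j i : Fin n → ℕ) a]).foldr (· ∘ ·) id) F =
      if j ∈ l then (pd j)^[i] F else F := by
  induction l with
  | nil => simp
  | cons a l ih =>
    obtain ⟨hal, hl'⟩ := List.nodup_cons.1 hl
    simp only [List.map_cons, List.foldr_cons, Function.comp_apply]
    rw [ih hl']
    by_cases haj : a = j
    · subst haj
      simp [hal]
    · simp [haj, Ne.symm haj]

lemma md_single (j : Fin n) (i : ℕ) (F : (Fin n → ℝ) → ℂ) :
    md (Pi.single j i) F = (pd j)^[i] F := by
  rw [md, foldr_comp_iterate_pd_single j i F (List.nodup_finRange n),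
    if_pos (List.mem_finRange j)]

lemma md_zero (F : (Fin n → ℝ) → ℂ) : md 0 F = F := by
  unfold md
  induction List.finRange n with
  | nil => rfl
  | cons a l ih => simpa using ih

lemma mOrd_single (j : Fin n) (i : ℕ) : mOrd (Pi.single j i) = i := by
  rw [mOrd, ← Nat.cast_sum, Finset.sum_pi_single', if_pos (Finset.mem_univ j)]

lemma mOrd_zero : mOrd (0 : Fin n → ℕ) = 0 := by simp [mOrd]

lemma iterate_pd_eq_pureDeriv (j : Fin n) (i : ℕ) {F : (Fin n → ℝ) → ℂ} (hF : ContDiff ℝ ∞ F) :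
    (pd j)^[i] F = pureDeriv (Pi.single j 1) i F := by
  induction i with
  | zero => simp
  | succ i ih =>
    funext x
    rw [Function.iterate_succ_apply', ih, pureDeriv_succ _ _ hF, pd]

lemma mixedD_single_zero (j : Fin n) (i : ℕ) {τ : (Fin n → ℝ) → (Fin n → ℝ) → ℂ}
    (hτ : ContDiff ℝ ∞ (Function.uncurry τ)) (x ξ : Fin n → ℝ) :
    mixedD (Pi.single j i) 0 τ x ξ =
      pureDeriv (Pi.single j 1, (0 : Fin n → ℝ)) i (Function.uncurry τ) (x, ξ) := by
  have hslice : ContDiff ℝ ∞ fun x' => τ x' ξ := hτ.comp (contDiff_prodMk_left ξ)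
  simp only [mixedD, md_zero, md_single]
  rw [iterate_pd_eq_pureDeriv j i hslice]
  simpa using pureDeriv_comp_affine (Pi.single j 1) i
    (ContinuousLinearMap.inl ℝ (Fin n → ℝ) (Fin n → ℝ)) (0, ξ) hτ x

lemma mixedD_zero_single (j : Fin n) (i : ℕ) {τ : (Fin n → ℝ) → (Fin n → ℝ) → ℂ}
    (hτ : ContDiff ℝ ∞ (Function.uncurry τ)) (x ξ : Fin n → ℝ) :
    mixedD 0 (Pi.single j i) τ x ξ =
      pureDeriv ((0 : Fin n → ℝ), Pi.single j 1) i (Function.uncurry τ) (x, ξ) := by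
  have hslice : ContDiff ℝ ∞ (τ x) := hτ.comp (contDiff_prodMk_right x)
  simp only [mixedD, md_zero, md_single]
  rw [iterate_pd_eq_pureDeriv j i hslice]
  simpa using pureDeriv_comp_affine (Pi.single j 1) i
    (ContinuousLinearMap.inr ℝ (Fin n → ℝ) (Fin n → ℝ)) (x, 0) hτ ξ

lemma exists_norm_pureDeriv_fst_le {m ρ : ℝ} {τ : (Fin n → ℝ) → (Fin n → ℝ) → ℂ}
    (hτ : SymbolClass m ρ 0 τ) (N : ℕ) :
    ∃ C > 0, ∀ (a : Fin n × Fin N) (p : (Fin n → ℝ) × (Fin n → ℝ)),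
      ‖pureDeriv (Pi.single a.1 1, (0 : Fin n → ℝ)) (a.2 + 1) (Function.uncurry τ) p‖ ≤
        C * wt p.2 ^ (m / 2) := by
  refine exists_pos_forall_le_mul (fun _ _ => Real.rpow_nonneg (wt_pos _).le _) fun a => ?_
  obtain ⟨C, -, hC⟩ := hτ.2 0 (Pi.single a.1 (a.2 + 1))
  refine ⟨C, fun p => ?_⟩
  simpa [mixedD_single_zero _ _ hτ.1, mOrd_zero] using hC p.1 p.2

lemma exists_norm_pureDeriv_snd_le {m ρ δ : ℝ} (hρ : 0 ≤ ρ)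
    {τ : (Fin n → ℝ) → (Fin n → ℝ) → ℂ} (hτ : SymbolClass m ρ δ τ) (N : ℕ) :
    ∃ C > 0, ∀ (a : Fin n × Fin N) (p : (Fin n → ℝ) × (Fin n → ℝ)),
      ‖pureDeriv ((0 : Fin n → ℝ), Pi.single a.1 1) (a.2 + 1) (Function.uncurry τ) p‖ ≤
        C * wt p.2 ^ ((m - ρ) / 2) := by
  refine exists_pos_forall_le_mul (fun _ _ => Real.rpow_nonneg (wt_pos _).le _) fun a => ?_
  obtain ⟨C, hC0, hC⟩ := hτ.2 (Pi.single a.1 (a.2 + 1)) 0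
  refine ⟨C, fun p => ?_⟩
  have hbound := hC p.1 p.2
  rw [mixedD_zero_single _ _ hτ.1, mOrd_zero, mOrd_single] at hbound
  refine hbound.trans ?_
  gcongr
  · exact one_le_wt _
  · push_cast
    nlinarith [mul_nonneg hρ (Nat.cast_nonneg (α := ℝ) a.2)]

lemma exists_norm_le_of_symbolClass {ρ δ : ℝ} {τ : (Fin n → ℝ) → (Fin n → ℝ) → ℂ}
    (hτ : SymbolClass 0 ρ δ τ) : ∃ B, ∀ x ξ, ‖τ x ξ‖ ≤ B := by
  obtain ⟨C, -, hC⟩ := hτ.2 0 0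
  exact ⟨C, fun x ξ => by simpa [mixedD, md_zero, mOrd_zero] using hC x ξ⟩

end Symbols

/-! ### Dilations -/

section Dilation

variable {n : ℕ}

/-- The symplectic dilation `(x, ξ) ↦ (l⁻¹ x, l ξ)`, from the Euclidean phase space to the plain
coordinates in which symbols are written. Composing a symbol with it for large `l` makes the
`x`-derivatives small. -/
def dilation (l : ℝ) : WithLp 2 (EuclideanSpace ℝ (Fin n) × EuclideanSpace ℝ (Fin n)) →L[ℝ]
    (Fin n → ℝ) × (Fin n → ℝ) :=
  let coords := (PiLp.continuousLinearEquiv 2 ℝ fun _ : Fin n => ℝ).toContinuousLinearMap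
  ((l⁻¹ • coords).prodMap (l • coords)).comp
    (WithLp.prodContinuousLinearEquiv 2 ℝ _ _).toContinuousLinearMap

lemma dilation_toLp (l : ℝ) (q : EuclideanSpace ℝ (Fin n) × EuclideanSpace ℝ (Fin n)) :
    dilation l (WithLp.toLp 2 q) = (l⁻¹ • WithLp.ofLp q.1, l • WithLp.ofLp q.2) := rfl

variable (n) in
/-- The standard orthonormal basis of phase space. -/
def phaseBasis : OrthonormalBasis (Fin n ⊕ Fin n) ℝ
    (WithLp 2 (EuclideanSpace ℝ (Fin n) × EuclideanSpace ℝ (Fin n))) :=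
  (EuclideanSpace.basisFun (Fin n) ℝ).prod (EuclideanSpace.basisFun (Fin n) ℝ)

lemma dilation_phaseBasis_inl (l : ℝ) (j : Fin n) :
    dilation l (phaseBasis n (.inl j)) = l⁻¹ • (Pi.single j 1, 0) := by
  simp [phaseBasis, dilation_toLp]

lemma dilation_phaseBasis_inr (l : ℝ) (j : Fin n) :
    dilation l (phaseBasis n (.inr j)) = l • (0, Pi.single j 1) := by
  simp [phaseBasis, dilation_toLp]

lemma norm_pureDeriv_comp_dilation_inl_le {F : (Fin n → ℝ) × (Fin n → ℝ) → ℂ}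
    (hF : ContDiff ℝ ∞ F) {l : ℝ} (hl : 1 ≤ l) (j : Fin n) (i : ℕ)
    (w : WithLp 2 (EuclideanSpace ℝ (Fin n) × EuclideanSpace ℝ (Fin n))) :
    ‖pureDeriv (phaseBasis n (.inl j)) (i + 1) (fun w => F (dilation l w)) w‖ ≤
      l⁻¹ * ‖pureDeriv (Pi.single j 1, 0) (i + 1) F (dilation l w)‖ := by
  have hcomp := pureDeriv_comp_affine (phaseBasis n (.inl j)) (i + 1) (dilation l) 0 hF w
  simp only [add_zero] at hcomp
  have hl0 : 0 < l := one_pos.trans_le hl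
  rw [hcomp, dilation_phaseBasis_inl, pureDeriv_smul, norm_mul, norm_pow, Complex.norm_real,
    Real.norm_of_nonneg (inv_pos.2 hl0).le]
  gcongr
  exact pow_le_of_le_one (inv_pos.2 hl0).le (inv_le_one_of_one_le₀ hl) i.succ_ne_zero

lemma norm_pureDeriv_comp_dilation_inr {F : (Fin n → ℝ) × (Fin n → ℝ) → ℂ}
    (hF : ContDiff ℝ ∞ F) {l : ℝ} (hl : 0 ≤ l) (j : Fin n) (i : ℕ)
    (w : WithLp 2 (EuclideanSpace ℝ (Fin n) × EuclideanSpace ℝ (Fin n))) :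
    ‖pureDeriv (phaseBasis n (.inr j)) i (fun w => F (dilation l w)) w‖ =
      l ^ i * ‖pureDeriv (0, Pi.single j 1) i F (dilation l w)‖ := by
  have hcomp := pureDeriv_comp_affine (phaseBasis n (.inr j)) i (dilation l) 0 hF w
  simp only [add_zero] at hcomp
  rw [hcomp, dilation_phaseBasis_inr, pureDeriv_smul, norm_mul, norm_pow, Complex.norm_real,
    Real.norm_of_nonneg hl]

lemma exists_norm_pureDeriv_comp_dilation_inl_le {ρ : ℝ}
    {τ : (Fin n → ℝ) → (Fin n → ℝ) → ℂ} (hτ : SymbolClass 0 ρ 0 τ) (K : ℕ) {ε : ℝ} (hε : 0 < ε) :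
    ∃ l, 1 ≤ l ∧ ∀ j, ∀ i < K, ∀ w,
      ‖pureDeriv (phaseBasis n (.inl j)) (i + 1)
        (fun w => Function.uncurry τ (dilation l w)) w‖ ≤ ε := by
  obtain ⟨C, -, hC⟩ := exists_norm_pureDeriv_fst_le hτ K
  have hl : 0 < max 1 (C / ε) := lt_max_of_lt_left one_pos
  refine ⟨max 1 (C / ε), le_max_left _ _, fun j i hi w => ?_⟩
  have hbound := hC (j, ⟨i, hi⟩) (dilation (max 1 (C / ε)) w)
  rw [zero_div, Real.rpow_zero, mul_one] at hbound
  refine (norm_pureDeriv_comp_dilation_inl_le hτ.1 (le_max_left _ _) j i w).trans ?_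
  rw [inv_mul_le_iff₀ hl]
  exact hbound.trans ((div_le_iff₀ hε).1 (le_max_right _ _))

lemma exists_norm_pureDeriv_comp_dilation_inr_le {ρ : ℝ} (hρ : 0 ≤ ρ)
    {τ : (Fin n → ℝ) → (Fin n → ℝ) → ℂ} (hτ : SymbolClass 0 ρ 0 τ) (K : ℕ) {l : ℝ} (hl : 1 ≤ l) :
    ∃ C, ∀ j, ∀ i < K, ∀ q : EuclideanSpace ℝ (Fin n) × EuclideanSpace ℝ (Fin n),
      ‖pureDeriv (phaseBasis n (.inr j)) (i + 1)
        (fun w => Function.uncurry τ (dilation l w)) (WithLp.toLp 2 q)‖ ≤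
      C * wt (WithLp.ofLp q.2) ^ (-ρ / 2) := by
  obtain ⟨C, hC0, hC⟩ := exists_norm_pureDeriv_snd_le hρ hτ K
  refine ⟨l ^ K * C, fun j i hi q => ?_⟩
  have hbound := hC (j, ⟨i, hi⟩) (dilation l (WithLp.toLp 2 q))
  rw [zero_sub] at hbound
  have hwt : wt (l • WithLp.ofLp q.2) ^ (-ρ / 2) ≤ wt (WithLp.ofLp q.2) ^ (-ρ / 2) :=
    Real.rpow_le_rpow_of_nonpos (wt_pos _) (wt_le_wt_smul hl _) (by linarith)
  rw [norm_pureDeriv_comp_dilation_inr (F := Function.uncurry τ) hτ.1 (zero_le_one.trans hl),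
    mul_assoc]
  gcongr
  · exact hi
  · exact hbound.trans (mul_le_mul_of_nonneg_left hwt hC0.le)

lemma exists_norm_pureDeriv_comp_dilation_le {ρ : ℝ} (hρ : 0 < ρ)
    {τ : (Fin n → ℝ) → (Fin n → ℝ) → ℂ} (hτ : SymbolClass 0 ρ 0 τ) (K : ℕ) {ε : ℝ} (hε : 0 < ε)
    {t : ℝ} (ht : t ≤ 0) :
    ∃ l, 1 ≤ l ∧ ∃ C > 0, ∀ j, ∀ i < K,
      ∀ q : EuclideanSpace ℝ (Fin n) × EuclideanSpace ℝ (Fin n),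
      ‖pureDeriv (phaseBasis n j) (i + 1)
        (fun w => Function.uncurry τ (dilation l w)) (WithLp.toLp 2 q)‖ ≤
      ε + C * wt (WithLp.ofLp q.2) ^ t := by
  obtain ⟨l, hl, hposition⟩ := exists_norm_pureDeriv_comp_dilation_inl_le hτ K hε
  obtain ⟨C₁, hfrequency⟩ := exists_norm_pureDeriv_comp_dilation_inr_le hρ.le hτ K hl
  obtain ⟨C, hC, hdecay⟩ :=
    exists_mul_rpow_le_add_mul_rpow (show -ρ / 2 < 0 by linarith) ht hε C₁
  refine ⟨l, hl, C, hC, fun j i hi q => ?_⟩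
  rcases j with j | j
  · exact (hposition j i hi _).trans
      (le_add_of_nonneg_right (mul_nonneg hC.le (Real.rpow_nonneg (wt_pos _).le t)))
  · exact (hfrequency j i hi q).trans (hdecay _ (one_le_wt _))

lemma integral_comp_smul_ofLp {E : Type*} [NormedAddCommGroup E] [NormedSpace ℝ E]
    (G : (Fin n → ℝ) → E) {c : ℝ} (hc : 0 < c) :
    ∫ x : EuclideanSpace ℝ (Fin n), G (c • WithLp.ofLp x) = (c ^ n)⁻¹ • ∫ x, G x := by
  have hsmul := Measure.integral_comp_smul (volume : Measure (Fin n → ℝ)) G c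
  rw [Module.finrank_fin_fun, abs_of_pos (by positivity)] at hsmul
  rw [← hsmul]
  exact (EuclideanSpace.volume_preserving_symm_measurableEquiv_toLp (Fin n)).integral_comp
    (MeasurableEquiv.measurableEmbedding _) fun y => G (c • y)

lemma integral_comp_inv_smul_ofLp {E : Type*} [NormedAddCommGroup E] [NormedSpace ℝ E]
    (G : (Fin n → ℝ) → E) {l : ℝ} (hl : 0 < l) :
    ∫ x : EuclideanSpace ℝ (Fin n), G (l⁻¹ • WithLp.ofLp x) = l ^ n • ∫ x, G x := by
  rw [integral_comp_smul_ofLp G (inv_pos.2 hl), inv_pow, inv_inv]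

/-- The Schwartz function `x ↦ f (l⁻¹ x)` on Euclidean space. -/
def dilate (l : ℝ) (hl : 0 < l) (f : 𝓢(Fin n → ℝ, ℂ)) : 𝓢(EuclideanSpace ℝ (Fin n), ℂ) :=
  SchwartzMap.compCLMOfContinuousLinearEquiv ℂ
    ((PiLp.continuousLinearEquiv 2 ℝ fun _ : Fin n => ℝ).trans
      (LinearEquiv.smulOfNeZero ℝ _ l⁻¹ (inv_ne_zero hl.ne')).toContinuousLinearEquiv) f

lemma dilate_apply {l : ℝ} (hl : 0 < l) (f : 𝓢(Fin n → ℝ, ℂ)) (x : EuclideanSpace ℝ (Fin n)) :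
    dilate l hl f x = f (l⁻¹ • WithLp.ofLp x) := rfl

lemma dotp_inv_smul_smul_ofLp {l : ℝ} (hl : l ≠ 0) (x y : EuclideanSpace ℝ (Fin n)) :
    dotp (l⁻¹ • WithLp.ofLp x) (l • WithLp.ofLp y) = ⟪x, y⟫ := by
  rw [PiLp.inner_apply, dotp]
  refine Finset.sum_congr rfl fun i _ => ?_
  simp only [Pi.smul_apply, smul_eq_mul, RCLike.inner_apply, conj_trivial]
  field_simp

lemma fourier_dilate {l : ℝ} (hl : 0 < l) (f : 𝓢(Fin n → ℝ, ℂ)) (ξ : EuclideanSpace ℝ (Fin n)) :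
    𝓕 (dilate l hl f) ξ = (l ^ n : ℝ) * FT f (l • WithLp.ofLp ξ) := by
  rw [SchwartzMap.fourier_coe, fourier_eq_integral_expi, ← Complex.real_smul, FT,
    ← integral_comp_inv_smul_ofLp _ hl]
  refine integral_congr_ae (.of_forall fun y => ?_)
  simp only
  rw [dilate_apply, dotp_inv_smul_smul_ofLp hl.ne', mul_comm]

lemma integral_norm_sq_dilate {l : ℝ} (hl : 0 < l) (f : 𝓢(Fin n → ℝ, ℂ)) :
    ∫ x, ‖dilate l hl f x‖ ^ 2 = l ^ n * ∫ x, ‖f x‖ ^ 2 :=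
  integral_comp_inv_smul_ofLp (fun x => ‖f x‖ ^ 2) hl

lemma integral_wt_rpow_mul_norm_sq_fourier_dilate {l : ℝ} (hl : 0 < l) (s : ℝ)
    (f : 𝓢(Fin n → ℝ, ℂ)) :
    ∫ ξ, wt (l • WithLp.ofLp ξ) ^ s * ‖𝓕 (dilate l hl f) ξ‖ ^ 2 = l ^ n * sobSq s f := by
  have hscale := integral_comp_smul_ofLp (fun ξ => wt ξ ^ s * ‖FT f ξ‖ ^ 2) hl
  calc _ = ∫ ξ : EuclideanSpace ℝ (Fin n), (l ^ n) ^ 2 *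
        (wt (l • WithLp.ofLp ξ) ^ s * ‖FT f (l • WithLp.ofLp ξ)‖ ^ 2) := by
        refine integral_congr_ae (.of_forall fun ξ => ?_)
        simp only
        rw [fourier_dilate, norm_mul, Complex.norm_real, Real.norm_of_nonneg (by positivity)]
        ring
    _ = _ := by
        rw [integral_const_mul, hscale, sobSq, smul_eq_mul]
        field_simp

lemma opKN_inv_smul_ofLp (τ : (Fin n → ℝ) → (Fin n → ℝ) → ℂ) {l : ℝ} (hl : 0 < l)
    (f : 𝓢(Fin n → ℝ, ℂ)) (x : EuclideanSpace ℝ (Fin n)) :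
    OpKN τ f (l⁻¹ • WithLp.ofLp x) = ∫ ξ : EuclideanSpace ℝ (Fin n),
      expi ⟪x, ξ⟫ * τ (l⁻¹ • WithLp.ofLp x) (l • WithLp.ofLp ξ) * 𝓕 (dilate l hl f) ξ := by
  have hscale := integral_comp_smul_ofLp (fun ξ =>
    expi (dotp (l⁻¹ • WithLp.ofLp x) ξ) * τ (l⁻¹ • WithLp.ofLp x) ξ * FT f ξ) hl
  rw [eq_inv_smul_iff₀ (by positivity)] at hscale
  rw [OpKN, ← hscale, ← integral_smul]
  refine integral_congr_ae (.of_forall fun ξ => ?_)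
  simp only
  rw [fourier_dilate, dotp_inv_smul_smul_ofLp hl.ne', Complex.real_smul]
  ring

lemma continuous_comp_dilation_toLp {F : (Fin n → ℝ) × (Fin n → ℝ) → ℂ} (hF : Continuous F)
    (l : ℝ) : Continuous fun q : EuclideanSpace ℝ (Fin n) × EuclideanSpace ℝ (Fin n) =>
      F (dilation l (WithLp.toLp 2 q)) :=
  hF.comp ((dilation l).continuous.comp (WithLp.prod_continuous_toLp 2 _ _))

lemma integral_mul_rihaczek_dilate {τ : (Fin n → ℝ) → (Fin n → ℝ) → ℂ}
    (hτ : Continuous (Function.uncurry τ)) {B : ℝ} (hB : ∀ x ξ, ‖τ x ξ‖ ≤ B) {l : ℝ} (hl : 0 < l)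
    (f : 𝓢(Fin n → ℝ, ℂ)) :
    ∫ q, Function.uncurry τ (dilation l (WithLp.toLp 2 q)) * rihaczek (dilate l hl f) q =
      (l ^ n : ℝ) * ∫ x, OpKN τ f x * (starRingEnd ℂ) (f x) := by
  have hint := integrable_mul_rihaczek (dilate l hl f) (continuous_comp_dilation_toLp hτ l)
    fun q => hB _ _
  rw [Measure.volume_eq_prod] at hint ⊢
  rw [integral_prod _ hint, ← Complex.real_smul, ← integral_comp_inv_smul_ofLp _ hl]
  refine integral_congr_ae (.of_forall fun x => ?_)
  simp only
  rw [opKN_inv_smul_ofLp τ hl, ← integral_mul_const]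
  refine integral_congr_ae (.of_forall fun ξ => ?_)
  simp only [rihaczek, Function.uncurry, dilation_toLp, dilate_apply]
  ring

lemma integral_sub_const_mul_rihaczek_dilate {τ : (Fin n → ℝ) → (Fin n → ℝ) → ℂ}
    (hτ : Continuous (Function.uncurry τ)) {B : ℝ} (hB : ∀ x ξ, ‖τ x ξ‖ ≤ B) (c : ℂ) {l : ℝ}
    (hl : 0 < l) (f : 𝓢(Fin n → ℝ, ℂ)) :
    ∫ q, (Function.uncurry τ (dilation l (WithLp.toLp 2 q)) - c) * rihaczek (dilate l hl f) q =
      (l ^ n : ℝ) * ((∫ x, OpKN τ f x * (starRingEnd ℂ) (f x)) - c * (∫ x, ‖f x‖ ^ 2 : ℝ)) := by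
  simp only [sub_mul]
  rw [integral_sub (integrable_mul_rihaczek _ (continuous_comp_dilation_toLp hτ l) fun q => hB _ _)
    ((integrable_rihaczek _).const_mul c), integral_const_mul, integral_rihaczek,
    integral_norm_sq_dilate, integral_mul_rihaczek_dilate hτ hB]
  push_cast
  ring

end Dilation

/-! ### The Gårding inequality -/

section Inequality

variable {n : ℕ}

lemma sq_add_mul_wt_rpow_div_le {ε : ℝ} (hε : 0 < ε) (C : ℝ) {s : ℝ} (hs : s ≤ 0) {l : ℝ}
    (hl : 1 ≤ l) (ξ : Fin n → ℝ) :
    (ε + C * wt ξ ^ (s / 2)) ^ 2 / ε ≤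
      2 * ε + 2 * C ^ 2 / ε * (l ^ 2) ^ (-s) * wt (l • ξ) ^ s := by
  have hsq : (wt ξ ^ (s / 2)) ^ 2 = wt ξ ^ s := by
    rw [← Real.rpow_natCast, ← Real.rpow_mul (wt_pos ξ).le, Nat.cast_two,
      div_mul_cancel₀ s two_ne_zero]
  have hdilate : wt ξ ^ s ≤ (l ^ 2) ^ (-s) * wt (l • ξ) ^ s :=
    rpow_le_rpow_mul_rpow_of_le_mul (by positivity) (wt_pos ξ) (wt_pos _) (wt_smul_le hl ξ) hs
  calc _ ≤ (2 * (ε ^ 2 + (C * wt ξ ^ (s / 2)) ^ 2)) / ε := by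
        gcongr
        exact add_sq_le
    _ = 2 * ε + 2 * C ^ 2 / ε * wt ξ ^ s := by
        rw [mul_pow, hsq]
        field_simp
    _ ≤ _ := by
        rw [mul_assoc _ (_ ^ (-s))]
        gcongr

lemma integrable_wt_rpow_mul_norm_sq {s : ℝ} (hs : s ≤ 0) (l : ℝ)
    (g : 𝓢(EuclideanSpace ℝ (Fin n), ℂ)) :
    Integrable fun ξ => wt (l • WithLp.ofLp ξ) ^ s * ‖g ξ‖ ^ 2 := by
  refine (integrable_norm_sq_schwartz g).bdd_mul (c := 1) ?_ (.of_forall fun ξ => ?_)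
  · exact ((continuous_wt_rpow s).comp
      ((PiLp.continuous_ofLp 2 _).const_smul l)).aestronglyMeasurable
  · rw [Real.norm_of_nonneg (Real.rpow_nonneg (wt_pos _).le _)]
    exact Real.rpow_le_one_of_one_le_of_nonpos (one_le_wt _) hs

lemma lintegral_weight_mul_fourier_dilate_le {ε : ℝ} (hε : 0 < ε) (C : ℝ) {s : ℝ} (hs : s ≤ 0)
    {l : ℝ} (hl : 1 ≤ l) (f : 𝓢(Fin n → ℝ, ℂ)) :
    ∫⁻ ξ : EuclideanSpace ℝ (Fin n),
        ENNReal.ofReal ((ε + C * wt (WithLp.ofLp ξ) ^ (s / 2)) ^ 2 / ε) *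
          ‖𝓕 (dilate l (one_pos.trans_le hl) f) ξ‖ₑ ^ 2 ≤
      ENNReal.ofReal (l ^ n * (2 * ε * (∫ x, ‖f x‖ ^ 2) +
        2 * C ^ 2 / ε * (l ^ 2) ^ (-s) * sobSq s f)) := by
  set F : 𝓢(EuclideanSpace ℝ (Fin n), ℂ) := 𝓕 (dilate l (one_pos.trans_le hl) f)
  set D : ℝ := 2 * C ^ 2 / ε * (l ^ 2) ^ (-s)
  have hL2 : Integrable fun ξ => 2 * ε * ‖F ξ‖ ^ 2 :=
    (integrable_norm_sq_schwartz F).const_mul _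
  have hsob : Integrable fun ξ => D * (wt (l • WithLp.ofLp ξ) ^ s * ‖F ξ‖ ^ 2) :=
    (integrable_wt_rpow_mul_norm_sq hs l F).const_mul D
  have hnorm : l ^ n * (2 * ε * (∫ x, ‖f x‖ ^ 2) + D * sobSq s f) =
      ∫ ξ, (2 * ε * ‖F ξ‖ ^ 2 + D * (wt (l • WithLp.ofLp ξ) ^ s * ‖F ξ‖ ^ 2)) := by
    rw [integral_add hL2 hsob, integral_const_mul, integral_const_mul,
      integral_wt_rpow_mul_norm_sq_fourier_dilate, SchwartzMap.integral_norm_sq_fourier,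
      integral_norm_sq_dilate]
    ring
  rw [hnorm]
  refine le_trans (lintegral_mono fun ξ => ?_)
    (ofReal_integral_eq_lintegral_ofReal (hL2.add hsob) (.of_forall fun ξ => ?_)).ge
  · rw [← ofReal_norm, ← ENNReal.ofReal_pow (norm_nonneg _), ← ENNReal.ofReal_mul (by positivity)]
    refine ENNReal.ofReal_le_ofReal ((mul_le_mul_of_nonneg_right
      (sq_add_mul_wt_rpow_div_le hε C hs hl _) (sq_nonneg _)).trans_eq ?_)
    simp only [Pi.add_apply, D]
    ring
  · have hwt := Real.rpow_nonneg (wt_pos (l • WithLp.ofLp ξ)).le s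
    simp only [Pi.zero_apply, Pi.add_apply, D]
    positivity

lemma sobSq_nonneg (s : ℝ) (f : (Fin n → ℝ) → ℂ) : 0 ≤ sobSq s f :=
  integral_nonneg fun ξ => mul_nonneg (Real.rpow_nonneg (wt_pos ξ).le s) (sq_nonneg _)

lemma sub_le_re_integral_opKN_of_rihaczek_le {τ : (Fin n → ℝ) → (Fin n → ℝ) → ℂ}
    (hτ : Continuous (Function.uncurry τ)) {B : ℝ} (hB : ∀ x ξ, ‖τ x ξ‖ ≤ B) (c₀ : ℝ) {K : ℝ≥0∞}
    (hK : K ≠ ⊤) {ε : ℝ} (hε : 0 < ε) (C : ℝ) {s : ℝ} (hs : s ≤ 0) {l : ℝ} (hl : 1 ≤ l)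
    (f : 𝓢(Fin n → ℝ, ℂ))
    (hlower : ENNReal.ofReal (-(∫ q, (Function.uncurry τ (dilation l (WithLp.toLp 2 q)) - c₀) *
        rihaczek (dilate l (one_pos.trans_le hl) f) q).re) ≤
      K * ((∫⁻ x, ENNReal.ofReal ε * ‖dilate l (one_pos.trans_le hl) f x‖ₑ ^ 2) +
        ∫⁻ ξ : EuclideanSpace ℝ (Fin n),
          ENNReal.ofReal ((ε + C * wt (WithLp.ofLp ξ) ^ (s / 2)) ^ 2 / ε) *
            ‖𝓕 (dilate l (one_pos.trans_le hl) f) ξ‖ₑ ^ 2)) :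
    (c₀ - K.toReal * (3 * ε)) * (∫ x, ‖f x‖ ^ 2) -
        K.toReal * (2 * C ^ 2 / ε * (l ^ 2) ^ (-s)) * sobSq s f ≤
      (∫ x, OpKN τ f x * (starRingEnd ℂ) (f x)).re := by
  set N : ℝ := ∫ x, ‖f x‖ ^ 2
  set D : ℝ := 2 * C ^ 2 / ε * (l ^ 2) ^ (-s)
  have hD : 0 ≤ D * sobSq s f := mul_nonneg (by positivity) (sobSq_nonneg s f)
  have hL2 : ∫⁻ x, ENNReal.ofReal ε * ‖dilate l (one_pos.trans_le hl) f x‖ₑ ^ 2 =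
      ENNReal.ofReal (l ^ n * (ε * N)) := by
    rw [lintegral_const_mul _ (by fun_prop), lintegral_enorm_sq_schwartz, integral_norm_sq_dilate,
      ← ENNReal.ofReal_mul hε.le, mul_left_comm]
  have hsum : l ^ n * (ε * N) + l ^ n * (2 * ε * N + D * sobSq s f) =
      l ^ n * (3 * ε * N + D * sobSq s f) := by ring
  have hupper := hlower.trans (mul_le_mul_right
    (add_le_add hL2.le (lintegral_weight_mul_fourier_dilate_le hε C hs hl f)) K)
  rw [← ENNReal.ofReal_toReal hK, ← ENNReal.ofReal_add (by positivity) (by positivity), hsum,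
    ← ENNReal.ofReal_mul ENNReal.toReal_nonneg, ENNReal.ofReal_le_ofReal_iff (by positivity),
    integral_sub_const_mul_rihaczek_dilate hτ hB, Complex.re_ofReal_mul, Complex.sub_re,
    ← Complex.ofReal_mul, Complex.ofReal_re, ← mul_neg, mul_left_comm,
    mul_le_mul_iff_right₀ (by positivity)] at hupper
  linarith

lemma exists_sub_le_re_integral_opKN (hn : 1 ≤ n) {s : ℝ} (hs : s ≤ 0) :
    ∃ K : ℝ, 0 ≤ K ∧ ∀ ρ : ℝ, 0 < ρ → ∀ σ : (Fin n → ℝ) → (Fin n → ℝ) → ℝ,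
      SymbolClass 0 ρ 0 (fun x ξ => (σ x ξ : ℂ)) → ∀ c₀ : ℝ, (∀ x ξ, c₀ ≤ σ x ξ) →
      ∀ ε > 0, ∃ C ≥ 0, ∀ f : 𝓢(Fin n → ℝ, ℂ),
        (c₀ - K * (3 * ε)) * (∫ x, ‖f x‖ ^ 2) - C * sobSq s f ≤
          (∫ x, OpKN (fun x ξ => (σ x ξ : ℂ)) f x * (starRingEnd ℂ) (f x)).re := by
  have : Nonempty (Fin n ⊕ Fin n) := ⟨.inl ⟨0, hn⟩⟩
  have ht : s / 2 ≤ 0 := by linarith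
  obtain ⟨k, hk⟩ := exists_nat_ge (-(s / 2))
  obtain ⟨K, hK, hpositive⟩ := exists_ofReal_neg_re_integral_rihaczek_le (phaseBasis n)
    (Nat.lt_succ_self _) (2 ^ k) (2 * k)
  refine ⟨K.toReal, ENNReal.toReal_nonneg, fun ρ hρ σ hσ c₀ hell ε hε => ?_⟩
  obtain ⟨l, hl, C, hC, hderiv⟩ := exists_norm_pureDeriv_comp_dilation_le hρ hσ _ hε ht
  obtain ⟨B, hB⟩ := exists_norm_le_of_symbolClass hσ
  have hl0 : 0 < l := one_pos.trans_le hl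
  have hσ_real : ContDiff ℝ ∞ fun w => Function.uncurry σ (dilation l w) :=
    (Complex.reCLM.contDiff.comp hσ.1).comp (dilation l).contDiff
  have hσ_complex : ContDiff ℝ ∞ fun w =>
      Function.uncurry (fun x ξ => (σ x ξ : ℂ)) (dilation l w) := hσ.1.comp (dilation l).contDiff
  refine ⟨K.toReal * (2 * C ^ 2 / ε * (l ^ 2) ^ (-s)), by positivity, fun f =>
    sub_le_re_integral_opKN_of_rihaczek_le hσ.1.continuous hB c₀ hK hε C hs hl f ?_⟩
  have hlower := hpositive (fun w => Function.uncurry σ (dilation l w) - c₀)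
    (hσ_real.sub contDiff_const) (fun w => sub_nonneg.2 (hell _ _))
    ⟨B - c₀, fun w => sub_le_sub_right ((Real.le_norm_self _).trans
      ((Complex.norm_real _).symm.trans_le (hB _ _))) c₀⟩
    _ (isModerate_add_mul_wt_rpow hε hC.le ht hk) (fun j i hi q => ?_) ε hε (dilate l hl0 f)
  · simp only [Complex.ofReal_sub] at hlower
    exact hlower
  · simp only [Complex.ofReal_sub]
    exact (congrArg norm (pureDeriv_sub_const _ i hσ_complex c₀ _)).trans_le (hderiv j i hi q)

end Inequality

end

end Garding

theorem garding_order_zero_general {n : ℕ} (hn : 1 ≤ n) {ρ : ℝ} (hρ : 0 < ρ)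
    {σ : (Fin n → ℝ) → (Fin n → ℝ) → ℝ}
    (hσ : SymbolClass 0 ρ 0 (fun x ξ => ((σ x ξ : ℝ) : ℂ)))
    {c₀ c : ℝ} (hell : ∀ x ξ, c₀ ≤ σ x ξ) (hc : c < c₀) {s : ℝ} (hs : s ≤ 0) :
    ∃ C > 0, ∀ f : SchwartzMap (Fin n → ℝ) ℂ,
      c * (∫ x, ‖f x‖ ^ 2) - C * sobSq s (⇑f)
        ≤ (∫ x, OpKN (fun x ξ => ((σ x ξ : ℝ) : ℂ)) (⇑f) x
            * (starRingEnd ℂ) (f x)).re := by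
  obtain ⟨K, hK, hlower⟩ := Garding.exists_sub_le_re_integral_opKN hn hs
  have hgap : 0 < c₀ - c := sub_pos.2 hc
  set ε : ℝ := (c₀ - c) / (3 * (K + 1)) with hε
  obtain ⟨C, hC, hgarding⟩ := hlower ρ hρ σ hσ c₀ hell ε (by positivity)
  have hcoeff : c ≤ c₀ - K * (3 * ε) := by
    have hsplit : 3 * ε * (K + 1) = c₀ - c := by
      rw [hε]
      field_simp
    have hε0 : 0 < ε := by positivity
    linarith
  refine ⟨C + 1, by positivity, fun f => le_trans ?_ (hgarding f)⟩
  have hsob := Garding.sobSq_nonneg s f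
  gcongr
  linarith

/-- two-term elliptic Gårding inequality in order `0`. -/
theorem garding_order_zero (n : ℕ) (hn : 1 ≤ n)
    (ρ : ℝ) (hρ : ρ ≤ 1) (hρ0 : 0 < ρ)
    (σ : (Fin n → ℝ) → (Fin n → ℝ) → ℝ)
    (hσ : SymbolClass 0 ρ 0 (fun x ξ => ((σ x ξ : ℝ) : ℂ)))
    (c₀ : ℝ) (hc₀ : 0 < c₀)
    (hell : ∀ x ξ, c₀ ≤ σ x ξ) :
    ∃ c > 0, ∃ C > 0, ∀ f : SchwartzMap (Fin n → ℝ) ℂ,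
      c * (∫ x, ‖f x‖ ^ 2) - C * sobSq (-ρ / 2) (⇑f)
        ≤ (∫ x, OpKN (fun x ξ => ((σ x ξ : ℝ) : ℂ)) (⇑f) x
            * (starRingEnd ℂ) (f x)).re := by
  exact ⟨c₀ / 2, half_pos hc₀,
    garding_order_zero_general hn hρ0 hσ hell (half_lt_self hc₀) (by linarith)⟩
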